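/- arXiv:2403.19494 — 3 statements merged into one kernel-verified Lean document; each statement's English description precedes it below -/
import Mathlib

section
/- (Corollary 3.3: excess error bound for the single-stage logistic surrogate.) Let ℓ_log(s,j) = log₂(Σ_{k=0}^{n_e} e^{s_k − s_j}) be the multinomial logistic loss on score vectors. Then for every probability measure μ on X×ℝ, every measurable predictor h : X → ℝ and every measurable deferral function r : X → ℝ^{n_e+1}, E_{L_def}(h,r) − E*_{L_def} ≤ Γ̄(E_{L_{ℓ_log}}(h,r) − E*_{L_{ℓ_log}}), where Γ̄(t) = max{ t, √(2·n_e)·(l̄ + Σ_{j=1}^{n_e} C_j)^{1/2}·t^{1/2} } and L_{ℓ_log} is the single-stage surrogate built from ℓ_log. -/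
open MeasureTheory Finset ENNReal

variable {X : Type*}

/-- The deferral loss `L_def(h,r,x,y)`. -/
noncomputable def defLoss (nE : ℕ) (L : ℝ → ℝ → ℝ) (c : Fin nE → X × ℝ → ℝ)
    (sel : (Fin (nE + 1) → ℝ) → Fin (nE + 1))
    (h : X → ℝ) (r : X → Fin (nE + 1) → ℝ) (z : X × ℝ) : ℝ :=
  (if sel (r z.1) = 0 then L (h z.1) z.2 else 0)
    + ∑ j : Fin nE, if sel (r z.1) = j.succ then c j z else 0

/-- The single-stage surrogate loss `L_ℓ(h,r,x,y)`. -/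
noncomputable def surLoss (nE : ℕ) (L : ℝ → ℝ → ℝ) (c : Fin nE → X × ℝ → ℝ)
    (ℓ : (Fin (nE + 1) → ℝ) → Fin (nE + 1) → ℝ)
    (h : X → ℝ) (r : X → Fin (nE + 1) → ℝ) (z : X × ℝ) : ℝ :=
  (∑ j, c j z) * ℓ (r z.1) 0
    + ∑ j : Fin nE, (L (h z.1) z.2 + ∑ j' ∈ univ.erase j, c j' z) * ℓ (r z.1) j.succ
    - ((nE : ℝ) - 1) * L (h z.1) z.2

/-- The two-stage surrogate loss `L^h_ℓ(r,x,y)` (no `−(n_e−1)L` term). -/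
noncomputable def surLossTS (nE : ℕ) (L : ℝ → ℝ → ℝ) (c : Fin nE → X × ℝ → ℝ)
    (ℓ : (Fin (nE + 1) → ℝ) → Fin (nE + 1) → ℝ)
    (h : X → ℝ) (r : X → Fin (nE + 1) → ℝ) (z : X × ℝ) : ℝ :=
  (∑ j, c j z) * ℓ (r z.1) 0
    + ∑ j : Fin nE, (L (h z.1) z.2 + ∑ j' ∈ univ.erase j, c j' z) * ℓ (r z.1) j.succ

/-- Generalization error of a nonnegative loss, as a Lebesgue integral in `[0,∞]`. -/
noncomputable def genErr {W : Type*} [MeasurableSpace W] (μ : Measure W) (f : W → ℝ) : ℝ≥0∞ :=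
  ∫⁻ w, ENNReal.ofReal (f w) ∂μ

variable [MeasurableSpace X]

/-- Multi-class zero-one generalization error `E_{ℓ01}(r)`. -/
noncomputable def E01 (nE : ℕ) (sel : (Fin (nE + 1) → ℝ) → Fin (nE + 1))
    (ν : Measure (X × Fin (nE + 1))) (r : X → Fin (nE + 1) → ℝ) : ℝ≥0∞ :=
  ν {z | sel (r z.1) ≠ z.2}

/-- Multi-class surrogate generalization error `E_ℓ(r)`. -/
noncomputable def Eell (nE : ℕ) (ℓ : (Fin (nE + 1) → ℝ) → Fin (nE + 1) → ℝ)
    (ν : Measure (X × Fin (nE + 1))) (r : X → Fin (nE + 1) → ℝ) : ℝ≥0∞ :=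
  ∫⁻ z, ENNReal.ofReal (ℓ (r z.1) z.2) ∂ν

/-- The multinomial logistic loss `ℓ_log(s,j) = log₂(Σ_k e^{s_k − s_j})` on score vectors. -/
noncomputable def ellLog (nE : ℕ) (s : Fin (nE + 1) → ℝ) (j : Fin (nE + 1)) : ℝ :=
  Real.logb 2 (∑ k, Real.exp (s k - s j))

/-!
The deferral loss and the surrogate are both linear in the vector formed by the loss of the
predictor and the costs of the experts, so after conditioning on `x` only the mean `v` of that
vector matters, and it suffices to compare pointwise.

Let `s` be scores selecting `k`, and let `m` be the choice of a comparator. In the conditional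
surrogate risk, `ℓ_log(s, j)` is weighted by `w j = ∑ i, v i - v j`, so that
`v k - v m = w m - w k`. If this is positive, the softmax mass is on the wrong side: balance it
between `k` and `m`, then move a fraction of it towards `m`. This keeps the normalization, leaves
all other terms alone, and lowers the risk by at least `(v k - v m)² / (2 (w k + w m))`. A better
predictor lowers the surrogate risk by at least as much as the deferral risk, because the
coefficient of the predictor's loss is at least one where `s` does not defer. Hence
`deferral regret ≤ √(2 n_e ∑ i, v i * surrogate regret)`, which Jensen's inequality integrates.
-/

open ProbabilityTheory

section LogisticLoss

variable {n : ℕ} {s : Fin (n + 1) → ℝ} {k m : Fin (n + 1)}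

lemma ellLog_eq_div (s : Fin (n + 1) → ℝ) (j : Fin (n + 1)) :
    ellLog n s j = (Real.log (∑ k, Real.exp (s k)) - s j) / Real.log 2 := by
  have hsum : 0 < ∑ k, Real.exp (s k) := sum_pos (fun _ _ => Real.exp_pos _) univ_nonempty
  simp only [ellLog, Real.logb, Real.exp_sub, ← sum_div]
  rw [Real.log_div hsum.ne' (Real.exp_ne_zero _), Real.log_exp]

lemma measurable_ellLog (j : Fin (n + 1)) : Measurable fun s => ellLog n s j := by
  unfold ellLog Real.logb
  fun_prop

lemma ellLog_nonneg (s : Fin (n + 1) → ℝ) (j : Fin (n + 1)) : 0 ≤ ellLog n s j := by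
  refine Real.logb_nonneg one_lt_two ?_
  simpa using single_le_sum (f := fun k => Real.exp (s k - s j))
    (fun _ _ => (Real.exp_pos _).le) (mem_univ j)

lemma one_le_ellLog {j : Fin (n + 1)} (hjk : j ≠ k) (hs : s j ≤ s k) : 1 ≤ ellLog n s j := by
  have hpair : ∑ i ∈ {j, k}, Real.exp (s i - s j) ≤ ∑ i, Real.exp (s i - s j) :=
    sum_le_sum_of_subset_of_nonneg (subset_univ _) fun _ _ _ => (Real.exp_pos _).le
  rw [sum_pair hjk, sub_self, Real.exp_zero] at hpair
  have hexp : 1 ≤ Real.exp (s k - s j) := Real.one_le_exp (sub_nonneg.2 hs)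
  rw [ellLog, Real.le_logb_iff_rpow_le one_lt_two (by linarith), Real.rpow_one]
  linarith

lemma card_le_sum_ellLog {t : Finset (Fin (n + 1))} (hkt : k ∉ t) (hs : ∀ j ∈ t, s j ≤ s k) :
    (#t : ℝ) ≤ ∑ j ∈ t, ellLog n s j := by
  simpa using t.card_nsmul_le_sum (ellLog n s) 1
    fun j hj => one_le_ellLog (ne_of_mem_of_not_mem hj hkt) (hs j hj)

/-- The logarithm of the mean of `exp a` and `exp b`: two equal scores at this level have the same
total softmax mass as the scores `a` and `b`. -/
noncomputable def logMeanExp (a b : ℝ) : ℝ := Real.log ((Real.exp a + Real.exp b) / 2)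

lemma exp_logMeanExp (a b : ℝ) :
    Real.exp (logMeanExp a b) = (Real.exp a + Real.exp b) / 2 :=
  Real.exp_log (by positivity)

lemma add_div_two_le_logMeanExp (a b : ℝ) : (a + b) / 2 ≤ logMeanExp a b := by
  have hconv := convexOn_exp.2 (Set.mem_univ a) (Set.mem_univ b)
    (one_half_pos (α := ℝ)).le one_half_pos.le (add_halves 1)
  simp only [smul_eq_mul] at hconv
  rw [logMeanExp, Real.le_log_iff_exp_le (by positivity)]
  rw [show (a + b) / 2 = 1 / 2 * a + 1 / 2 * b by ring]
  linarith

/-- The scores `s` with the total softmax mass of `k` and `m` kept, but split between them in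
proportion `1 - θ` to `1 + θ`. -/
noncomputable def splitScores (s : Fin (n + 1) → ℝ) (k m : Fin (n + 1)) (θ : ℝ) :
    Fin (n + 1) → ℝ :=
  Function.update (Function.update s k (logMeanExp (s k) (s m) + Real.log (1 - θ)))
    m (logMeanExp (s k) (s m) + Real.log (1 + θ))

lemma splitScores_left (hkm : k ≠ m) (θ : ℝ) :
    splitScores s k m θ k = logMeanExp (s k) (s m) + Real.log (1 - θ) := by
  simp [splitScores, hkm]

lemma splitScores_right (θ : ℝ) :
    splitScores s k m θ m = logMeanExp (s k) (s m) + Real.log (1 + θ) := by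
  simp [splitScores]

lemma splitScores_of_ne {i : Fin (n + 1)} (hi : i ≠ k ∧ i ≠ m) (θ : ℝ) :
    splitScores s k m θ i = s i := by
  simp [splitScores, hi.1, hi.2]

lemma sum_exp_splitScores (hkm : k ≠ m) {θ : ℝ} (hθ : |θ| < 1) :
    ∑ i, Real.exp (splitScores s k m θ i) = ∑ i, Real.exp (s i) := by
  obtain ⟨hθ_neg, hθ_pos⟩ := abs_lt.1 hθ
  rw [← sub_eq_zero, ← sum_sub_distrib, Fintype.sum_eq_add k m hkm fun i hi => by
      rw [splitScores_of_ne hi, sub_self],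
    splitScores_left hkm, splitScores_right, Real.exp_add, Real.exp_add, exp_logMeanExp,
    Real.exp_log (by linarith), Real.exp_log (by linarith)]
  ring

lemma sum_mul_ellLog_sub_splitScores (w : Fin (n + 1) → ℝ) (hkm : k ≠ m) {θ : ℝ} (hθ : |θ| < 1) :
    ∑ j, w j * ellLog n s j - ∑ j, w j * ellLog n (splitScores s k m θ) j =
      (w k * (logMeanExp (s k) (s m) + Real.log (1 - θ) - s k) +
        w m * (logMeanExp (s k) (s m) + Real.log (1 + θ) - s m)) / Real.log 2 := by
  simp only [ellLog_eq_div, sum_exp_splitScores hkm hθ]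
  rw [← sum_sub_distrib, Fintype.sum_eq_add k m hkm fun i hi => by
      rw [splitScores_of_ne hi, sub_self],
    splitScores_left hkm, splitScores_right]
  ring

/-- Balancing the two scores first cannot hurt, because `m` has the larger weight and the smaller
score; what remains is the effect of the unequal split. -/
lemma le_sum_mul_ellLog_sub_splitScores {w : Fin (n + 1) → ℝ} (hkm : k ≠ m) (hs : s m ≤ s k)
    (hwk : 0 ≤ w k) (hw : w k ≤ w m) {θ : ℝ} (hθ : |θ| < 1) :
    (w k * Real.log (1 - θ) + w m * Real.log (1 + θ)) / Real.log 2 ≤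
      ∑ j, w j * ellLog n s j - ∑ j, w j * ellLog n (splitScores s k m θ) j := by
  rw [sum_mul_ellLog_sub_splitScores w hkm hθ]
  have hmid := add_div_two_le_logMeanExp (s k) (s m)
  have hbalance : 0 ≤ w k * (2 * logMeanExp (s k) (s m) - s k - s m) +
      (w m - w k) * (logMeanExp (s k) (s m) - s m) :=
    add_nonneg (mul_nonneg hwk (by linarith)) (mul_nonneg (by linarith) (by linarith))
  refine div_le_div_of_nonneg_right ?_ (Real.log_nonneg one_le_two)
  linarith

lemma log_two_le_one_add_log_three_quarters : Real.log 2 ≤ 1 + Real.log (3 / 4) := by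
  have hexp : Real.log (8 / 3) ≤ 1 := by
    rw [Real.log_le_iff_le_exp (by norm_num)]
    linarith [Real.exp_one_gt_d9]
  rw [show (8 / 3 : ℝ) = 2 / (3 / 4) by norm_num, Real.log_div (by norm_num) (by norm_num)] at hexp
  linarith

lemma log_two_mul_sq_le {δ : ℝ} (h0 : 0 ≤ δ) (h1 : δ ≤ 1) :
    Real.log 2 * δ ^ 2 ≤
      (1 + δ) * Real.log (1 + δ / 2) + (1 - δ) * Real.log (1 - δ / 2) := by
  have hdiff : δ ≤ Real.log (1 + δ / 2) - Real.log (1 - δ / 2) := by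
    have hseries := Real.sum_range_le_log_div (x := δ / 2) (by linarith) (by linarith) 1
    rw [Real.log_div (by linarith) (by linarith), sum_range_one] at hseries
    norm_num at hseries
    linarith
  have hsum : δ ^ 2 * Real.log (3 / 4) ≤ Real.log (1 + δ / 2) + Real.log (1 - δ / 2) := by
    have hconc := strictConcaveOn_log_Ioi.concaveOn.2 (x := 1) (y := 3 / 4)
      (Set.mem_Ioi.2 one_pos) (Set.mem_Ioi.2 (by norm_num))
      (sub_nonneg.2 (pow_le_one₀ h0 h1)) (sq_nonneg δ) (sub_add_cancel 1 (δ ^ 2))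
    simp only [smul_eq_mul, Real.log_one, mul_zero, zero_add] at hconc
    rw [← Real.log_mul (by linarith) (by linarith)]
    rwa [show (1 + δ / 2) * (1 - δ / 2) = (1 - δ ^ 2) * 1 + δ ^ 2 * (3 / 4) by ring]
  calc Real.log 2 * δ ^ 2
      ≤ (1 + Real.log (3 / 4)) * δ ^ 2 := by
        gcongr
        exact log_two_le_one_add_log_three_quarters
    _ = δ * δ + δ ^ 2 * Real.log (3 / 4) := by ring
    _ ≤ δ * (Real.log (1 + δ / 2) - Real.log (1 - δ / 2)) +
          (Real.log (1 + δ / 2) + Real.log (1 - δ / 2)) := by gcongr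
    _ = _ := by ring

/-- The scores `s` with the softmax mass of `k` and `m` split according to half of the relative
difference of the weights `w k` and `w m`. The split minimizing `∑ j, w j * ellLog n s j` uses the
full difference, but it would need the score `-∞` at `k` when `w k = 0`. -/
noncomputable def rebalancedScores (w s : Fin (n + 1) → ℝ) (k m : Fin (n + 1)) :
    Fin (n + 1) → ℝ :=
  splitScores s k m ((w m - w k) / (w m + w k) / 2)

lemma sq_sub_le_mul_sum_mul_ellLog_sub {w : Fin (n + 1) → ℝ} (hs : s m ≤ s k) (hwk : 0 ≤ w k)
    (hw : w k < w m) :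
    (w m - w k) ^ 2 ≤ 2 * (w m + w k) *
      (∑ j, w j * ellLog n s j - ∑ j, w j * ellLog n (rebalancedScores w s k m) j) := by
  have hkm : k ≠ m := by rintro rfl; exact hw.false
  set u := w m + w k
  have hu_pos : 0 < u := by linarith
  set δ := (w m - w k) / u
  have hδu : δ * u = w m - w k := div_mul_cancel₀ _ hu_pos.ne'
  have hδ0 : 0 ≤ δ := div_nonneg (by linarith) hu_pos.le
  have hδ1 : δ ≤ 1 := (div_le_one hu_pos).2 (by linarith)
  have hwm_eq : w m = u / 2 * (1 + δ) := by linarith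
  have hwk_eq : w k = u / 2 * (1 - δ) := by linarith
  have hθ : |δ / 2| < 1 := abs_lt.2 ⟨by linarith, by linarith⟩
  calc (w m - w k) ^ 2
      = 2 * u * (u / 2 * δ ^ 2) := by rw [← hδu]; ring
    _ ≤ 2 * u * ((w k * Real.log (1 - δ / 2) + w m * Real.log (1 + δ / 2)) / Real.log 2) := by
        gcongr
        rw [le_div_iff₀ (Real.log_pos one_lt_two)]
        calc u / 2 * δ ^ 2 * Real.log 2 = u / 2 * (Real.log 2 * δ ^ 2) := by ring
          _ ≤ u / 2 * ((1 + δ) * Real.log (1 + δ / 2) + (1 - δ) * Real.log (1 - δ / 2)) := by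
              gcongr
              exact log_two_mul_sq_le hδ0 hδ1
          _ = _ := by rw [hwk_eq, hwm_eq]; ring
    _ ≤ _ := by
        gcongr
        exact le_sum_mul_ellLog_sub_splitScores hkm hs hwk hw.le hθ

end LogisticLoss

section SurrogateWeight

variable {n : ℕ} {v s : Fin (n + 1) → ℝ} {k m : Fin (n + 1)}

/-- The coefficient of the cost `v i` in the single-stage surrogate built from `ℓ` at the scores
`s`, where `v 0` is the loss of the predictor and `v j.succ` the cost of deferring to expert `j`. -/
noncomputable def surrogateWeight (ℓ : (Fin (n + 1) → ℝ) → Fin (n + 1) → ℝ)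
    (s : Fin (n + 1) → ℝ) (i : Fin (n + 1)) : ℝ :=
  ∑ j ∈ univ.erase i, ℓ s j - if i = 0 then (n : ℝ) - 1 else 0

/-- The total cost of all choices other than `j`, which is what the surrogate multiplies `ℓ s j`
by. -/
noncomputable def complementCost (v : Fin (n + 1) → ℝ) (j : Fin (n + 1)) : ℝ :=
  ∑ i ∈ univ.erase j, v i

lemma complementCost_eq_sub (v : Fin (n + 1) → ℝ) (j : Fin (n + 1)) :
    complementCost v j = ∑ i, v i - v j :=
  sum_erase_eq_sub (mem_univ j)

lemma complementCost_nonneg (hv : 0 ≤ v) (j : Fin (n + 1)) : 0 ≤ complementCost v j :=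
  sum_nonneg fun i _ => hv i

lemma sum_complementCost (v : Fin (n + 1) → ℝ) : ∑ j, complementCost v j = n * ∑ i, v i := by
  simp only [complementCost_eq_sub, sum_sub_distrib, sum_const, card_univ, Fintype.card_fin,
    nsmul_eq_mul]
  push_cast
  ring

lemma complementCost_add_le (hv : 0 ≤ v) (hkm : k ≠ m) :
    complementCost v m + complementCost v k ≤ n * ∑ i, v i := by
  rw [← sum_complementCost, ← sum_pair (f := complementCost v) hkm.symm]
  exact sum_le_sum_of_subset_of_nonneg (subset_univ _) fun j _ _ => complementCost_nonneg hv j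

lemma surrogateWeight_dotProduct (ℓ : (Fin (n + 1) → ℝ) → Fin (n + 1) → ℝ)
    (s v : Fin (n + 1) → ℝ) :
    surrogateWeight ℓ s ⬝ᵥ v = ∑ j, complementCost v j * ℓ s j - (n - 1) * v 0 := by
  simp only [dotProduct, surrogateWeight, complementCost_eq_sub, sum_erase_eq_sub (mem_univ _),
    sub_mul, sum_sub_distrib, ite_mul, zero_mul, sum_ite_eq', mem_univ, if_true, ← mul_sum]
  simp only [mul_comm]

lemma surrogateWeight_dotProduct_sub {v' : Fin (n + 1) → ℝ}
    (hsucc : ∀ j : Fin n, v' j.succ = v j.succ) (ℓ : (Fin (n + 1) → ℝ) → Fin (n + 1) → ℝ) :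
    surrogateWeight ℓ s ⬝ᵥ v - surrogateWeight ℓ s ⬝ᵥ v' =
      surrogateWeight ℓ s 0 * (v 0 - v' 0) := by
  simp only [dotProduct, Fin.sum_univ_succ, hsucc]
  ring

lemma measurable_surrogateWeight_ellLog :
    Measurable fun s : Fin (n + 1) → ℝ => surrogateWeight (ellLog n) s :=
  measurable_pi_lambda _ fun _ =>
    (Finset.measurable_fun_sum _ fun j _ => measurable_ellLog j).sub_const _

lemma one_le_surrogateWeight_ellLog_zero (hs : ∀ j, s j ≤ s 0) :
    1 ≤ surrogateWeight (ellLog n) s 0 := by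
  have hsum := card_le_sum_ellLog (notMem_erase 0 univ) fun j _ => hs j
  rw [card_erase_of_mem (mem_univ _), card_univ, Fintype.card_fin, Nat.add_sub_cancel] at hsum
  rw [surrogateWeight, if_pos rfl]
  linarith

lemma surrogateWeight_ellLog_nonneg (s : Fin (n + 1) → ℝ) : 0 ≤ surrogateWeight (ellLog n) s := by
  intro i
  have hsum_nonneg (t : Finset (Fin (n + 1))) : 0 ≤ ∑ j ∈ t, ellLog n s j :=
    sum_nonneg fun j _ => ellLog_nonneg s j
  rcases eq_or_ne i 0 with rfl | hi
  · obtain ⟨k, hk⟩ := Finite.exists_max s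
    have hcard : n ≤ #((univ.erase (0 : Fin (n + 1))).erase k) + 1 := by
      simpa using pred_card_le_card_erase (s := univ.erase (0 : Fin (n + 1))) (a := k)
    have hsum := card_le_sum_ellLog (notMem_erase k (univ.erase 0)) fun j _ => hk j
    have herase : ∑ j ∈ (univ.erase 0).erase k, ellLog n s j ≤ ∑ j ∈ univ.erase 0, ellLog n s j :=
      sum_le_sum_of_subset_of_nonneg (erase_subset _ _) fun j _ _ => ellLog_nonneg s j
    rw [surrogateWeight, if_pos rfl]
    have hcard' : (n : ℝ) ≤ #((univ.erase (0 : Fin (n + 1))).erase k) + 1 := mod_cast hcard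
    simp only [Pi.zero_apply]
    linarith
  · simpa [surrogateWeight, hi] using hsum_nonneg (univ.erase i)

/-- Scores with smaller surrogate risk for the costs `v` when `m` is strictly cheaper than the
top-scoring choice `k`. -/
noncomputable def improvedScores (v s : Fin (n + 1) → ℝ) (k m : Fin (n + 1)) : Fin (n + 1) → ℝ :=
  if v m < v k then rebalancedScores (complementCost v) s k m else s

lemma sq_le_surrogate_sub_improvedScores (hv : 0 ≤ v) (hs : s m ≤ s k) :
    max (v k - v m) 0 ^ 2 ≤ 2 * (n * ∑ i, v i) * (surrogateWeight (ellLog n) s ⬝ᵥ v -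
      surrogateWeight (ellLog n) (improvedScores v s k m) ⬝ᵥ v) := by
  rcases le_or_gt (v k) (v m) with hle | hlt
  · simp [improvedScores, hle.not_gt, hle]
  have hkm : k ≠ m := by rintro rfl; exact hlt.false
  have hsub : complementCost v m - complementCost v k = v k - v m := by
    rw [complementCost_eq_sub, complementCost_eq_sub]
    ring
  have hregret := sq_sub_le_mul_sum_mul_ellLog_sub hs (complementCost_nonneg hv k)
    (sub_pos.1 (hsub ▸ sub_pos.2 hlt))
  rw [hsub] at hregret
  rw [max_eq_left (sub_nonneg.2 hlt.le), improvedScores, if_pos hlt, surrogateWeight_dotProduct,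
    surrogateWeight_dotProduct, sub_sub_sub_cancel_right]
  have hgain := pos_of_mul_pos_right ((pow_pos (sub_pos.2 hlt) 2).trans_le hregret)
    (mul_nonneg zero_le_two
      (add_nonneg (complementCost_nonneg hv m) (complementCost_nonneg hv k)))
  refine hregret.trans ?_
  gcongr
  exact complementCost_add_le hv hkm

lemma surrogate_improvedScores_le (hv : 0 ≤ v) (hs : s m ≤ s k) :
    surrogateWeight (ellLog n) (improvedScores v s k m) ⬝ᵥ v ≤
      surrogateWeight (ellLog n) s ⬝ᵥ v := by
  rcases le_or_gt (v k) (v m) with hle | hlt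
  · simp [improvedScores, hle.not_gt]
  · have hsq : 0 < max (v k - v m) 0 ^ 2 := pow_pos (lt_max_of_lt_left (sub_pos.2 hlt)) 2
    have hgain := hsq.trans_le (sq_le_surrogate_sub_improvedScores hv hs)
    exact sub_nonneg.1 (pos_of_mul_pos_right hgain
      (mul_nonneg zero_le_two (mul_nonneg n.cast_nonneg (sum_nonneg fun i _ => hv i)))).le

lemma sub_le_surrogate_sub {v' : Fin (n + 1) → ℝ} (hk : ∀ j, s j ≤ s k) (hle : v' ≤ v)
    (hsucc : ∀ j : Fin n, v' j.succ = v j.succ) :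
    v k - v' k ≤ surrogateWeight (ellLog n) s ⬝ᵥ v - surrogateWeight (ellLog n) s ⬝ᵥ v' := by
  rw [surrogateWeight_dotProduct_sub hsucc]
  have h0 : 0 ≤ v 0 - v' 0 := sub_nonneg.2 (hle 0)
  cases k using Fin.cases with
  | zero => exact le_mul_of_one_le_left h0 (one_le_surrogateWeight_ellLog_zero hk)
  | succ j =>
    rw [hsucc, sub_self]
    exact mul_nonneg (surrogateWeight_ellLog_nonneg s 0) h0

lemma surrogate_improvedScores_le_of_le {v' : Fin (n + 1) → ℝ} (hs : s m ≤ s k) (hv' : 0 ≤ v')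
    (hle : v' ≤ v) :
    surrogateWeight (ellLog n) (improvedScores v' s k m) ⬝ᵥ v' ≤
      surrogateWeight (ellLog n) s ⬝ᵥ v :=
  (surrogate_improvedScores_le hv' hs).trans
    (dotProduct_le_dotProduct_of_nonneg_left hle (surrogateWeight_ellLog_nonneg s))

lemma selected_cost_sub_le_sqrt {v' : Fin (n + 1) → ℝ} (hn : 1 ≤ n) (hk : ∀ j, s j ≤ s k)
    (hv' : 0 ≤ v') (hle : v' ≤ v) (hsucc : ∀ j : Fin n, v' j.succ = v j.succ) :
    v k - v' m ≤ √(2 * (n * ∑ i, v i) * (surrogateWeight (ellLog n) s ⬝ᵥ v -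
      surrogateWeight (ellLog n) (improvedScores v' s k m) ⬝ᵥ v')) := by
  have hvk : v k ≤ ∑ i, v i := single_le_sum (fun i _ => (hv'.trans hle) i) (mem_univ k)
  have hsum : ∑ i, v i ≤ n * ∑ i, v i :=
    le_mul_of_one_le_left (sum_nonneg fun i _ => (hv'.trans hle) i) (mod_cast hn)
  set K := 2 * (n * ∑ i, v i) with hK
  set t₁ := surrogateWeight (ellLog n) s ⬝ᵥ v - surrogateWeight (ellLog n) s ⬝ᵥ v'
  set t₂ := surrogateWeight (ellLog n) s ⬝ᵥ v' -
    surrogateWeight (ellLog n) (improvedScores v' s k m) ⬝ᵥ v'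
  -- the gains from the better predictor and from the better deferral, respectively
  set a := v k - v' k
  set b := max (v' k - v' m) 0
  have ha : 0 ≤ a := sub_nonneg.2 (hle k)
  have hat : a ≤ t₁ := sub_le_surrogate_sub hk hle hsucc
  have hbt : b ^ 2 ≤ K * t₂ := by
    refine (sq_le_surrogate_sub_improvedScores hv' (hk m)).trans ?_
    have ht₂_nonneg : 0 ≤ t₂ := sub_nonneg.2 (surrogate_improvedScores_le hv' (hk m))
    rw [hK]
    gcongr
    exact hle _
  have hab : a + b ≤ v k := by
    have hb_le : b ≤ v' k := max_le (sub_le_self _ (hv' m)) (hv' k)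
    linarith
  calc v k - v' m
      ≤ a + b := by linarith [le_max_left (v' k - v' m) 0]
    _ ≤ √(K * (t₁ + t₂)) := Real.le_sqrt_of_sq_le <| calc
        (a + b) ^ 2 = a * (a + 2 * b) + b ^ 2 := by ring
        _ ≤ t₁ * K + K * t₂ := by gcongr <;> linarith
        _ = K * (t₁ + t₂) := by ring
    _ = _ := by rw [sub_add_sub_cancel]

end SurrogateWeight

section Measurability

variable {n : ℕ}

lemma measurable_apply_fin {v : X → Fin n → ℝ} {k : X → Fin n} (hv : Measurable v)
    (hk : Measurable k) : Measurable fun x => v x (k x) :=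
  (measurable_from_prod_countable_right (f := fun p : Fin n × (Fin n → ℝ) => p.2 p.1)
    fun i => measurable_pi_apply i).comp (hk.prodMk hv)

lemma measurable_dotProduct {ι : Type*} [Fintype ι] {w v : X → ι → ℝ} (hw : Measurable w)
    (hv : Measurable v) : Measurable fun x => w x ⬝ᵥ v x := by
  unfold dotProduct
  fun_prop

lemma measurable_splitScores {s : X → Fin (n + 1) → ℝ} {θ : X → ℝ} (hs : Measurable s)
    (hθ : Measurable θ) (k m : Fin (n + 1)) :
    Measurable fun x => splitScores (s x) k m (θ x) := by
  refine measurable_pi_lambda _ fun i => ?_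
  simp only [splitScores, Function.update_apply, logMeanExp]
  split_ifs <;> fun_prop

lemma measurable_improvedScores {v s : X → Fin (n + 1) → ℝ} {k m : X → Fin (n + 1)}
    (hv : Measurable v) (hs : Measurable s) (hk : Measurable k) (hm : Measurable m) :
    Measurable fun x => improvedScores (v x) (s x) (k x) (m x) := by
  have hfixed (i j : Fin (n + 1)) : Measurable fun x => improvedScores (v x) (s x) i j := by
    unfold improvedScores rebalancedScores complementCost
    refine Measurable.ite (measurableSet_lt (by fun_prop) (by fun_prop)) ?_ hs
    exact measurable_splitScores hs (by fun_prop) i j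
  exact (measurable_from_prod_countable_right
    (f := fun p : (Fin (n + 1) × Fin (n + 1)) × X => improvedScores (v p.2) (s p.2) p.1.1 p.1.2)
    fun i => hfixed i.1 i.2).comp ((hk.prodMk hm).prodMk measurable_id)

end Measurability

section ConditionalMean

variable {Y ι : Type*} [MeasurableSpace Y] {v : X × Y → ι → ℝ} {b : ι → ℝ}

/-- The coordinatewise mean of the vectors `v (x, y)` over `y` distributed according to `κ x`. -/
noncomputable def condMean (κ : Kernel X Y) (v : X × Y → ι → ℝ) (x : X) (i : ι) : ℝ :=
  ∫ y, v (x, y) i ∂κ x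

lemma measurable_condMean (κ : Kernel X Y) [IsSFiniteKernel κ] (hv : Measurable v) :
    Measurable (condMean κ v) :=
  measurable_pi_lambda _ fun i =>
    ((measurable_pi_apply i).comp hv).stronglyMeasurable.integral_kernel_prod_right'.measurable

lemma integrable_slice (ν : Measure Y) [IsFiniteMeasure ν] (hv : Measurable v)
    (hb : ∀ z, v z ∈ Set.Icc 0 b) (x : X) (i : ι) : Integrable (fun y => v (x, y) i) ν :=
  .of_mem_Icc 0 (b i) (by fun_prop) (ae_of_all _ fun y => ⟨(hb (x, y)).1 i, (hb (x, y)).2 i⟩)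

lemma condMean_mem_Icc (κ : Kernel X Y) [IsMarkovKernel κ] (hv : Measurable v)
    (hb : ∀ z, v z ∈ Set.Icc 0 b) (x : X) : condMean κ v x ∈ Set.Icc 0 b := by
  refine ⟨fun i => integral_nonneg fun y => (hb (x, y)).1 i, fun i => ?_⟩
  calc condMean κ v x i
      ≤ ∫ _, b i ∂κ x := integral_mono (integrable_slice (κ x) hv hb x i) (integrable_const _)
        fun y => (hb (x, y)).2 i
    _ = b i := by simp

lemma genErr_dotProduct [StandardBorelSpace Y] [Nonempty Y] [Fintype ι] (μ : Measure (X × Y))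
    [IsFiniteMeasure μ] {w : X → ι → ℝ} (hw : Measurable w) (hw_nonneg : ∀ x, 0 ≤ w x)
    (hv : Measurable v) (hb : ∀ z, v z ∈ Set.Icc 0 b) :
    genErr μ (fun z => w z.1 ⬝ᵥ v z) =
      ∫⁻ x, ENNReal.ofReal (w x ⬝ᵥ condMean μ.condKernel v x) ∂μ.fst := by
  have hint (x : X) (i : ι) : Integrable (fun y => w x i * v (x, y) i) (μ.condKernel x) :=
    (integrable_slice _ hv hb x i).const_mul _
  have hmeas : Measurable fun z : X × Y => w z.1 ⬝ᵥ v z :=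
    measurable_dotProduct (hw.comp measurable_fst) hv
  have hmean (x : X) :
      w x ⬝ᵥ condMean μ.condKernel v x = ∫ y, w x ⬝ᵥ v (x, y) ∂μ.condKernel x := by
    simp only [dotProduct, condMean, ← integral_const_mul]
    exact (integral_finsetSum _ fun i _ => hint x i).symm
  have hint_dot (x : X) : Integrable (fun y => w x ⬝ᵥ v (x, y)) (μ.condKernel x) :=
    integrable_finsetSum _ fun i _ => hint x i
  calc genErr μ (fun z => w z.1 ⬝ᵥ v z)
      = ∫⁻ z, ENNReal.ofReal (w z.1 ⬝ᵥ v z) ∂(μ.fst ⊗ₘ μ.condKernel) := by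
        rw [μ.disintegrate μ.condKernel, genErr]
    _ = ∫⁻ x, ∫⁻ y, ENNReal.ofReal (w x ⬝ᵥ v (x, y)) ∂μ.condKernel x ∂μ.fst :=
        Measure.lintegral_compProd hmeas.ennreal_ofReal
    _ = _ := by
        refine lintegral_congr fun x => ?_
        rw [hmean, ofReal_integral_eq_lintegral_ofReal (hint_dot x)]
        exact ae_of_all _ fun y => dotProduct_nonneg_of_nonneg (hw_nonneg x) (hb (x, y)).1

end ConditionalMean

lemma lintegral_rpow_half_le (ν : Measure X) [IsProbabilityMeasure ν] {f : X → ℝ≥0∞}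
    (hf : AEMeasurable f ν) :
    ∫⁻ x, f x ^ ((1 : ℝ) / 2) ∂ν ≤ (∫⁻ x, f x ∂ν) ^ ((1 : ℝ) / 2) := by
  simpa using lintegral_mul_norm_pow_le hf (aemeasurable_const (b := (1 : ℝ≥0∞)))
    one_half_pos.le one_half_pos.le (add_halves (1 : ℝ))

/-- Passes from a pointwise regret bound, with square root, to the integrated one: the pointwise
surrogate regret is `S x - S' x`. -/
lemma lintegral_ofReal_le_add_sqrt (ν : Measure X) [IsProbabilityMeasure ν] {f g S S' : X → ℝ}
    {K : ℝ} (hg : Measurable g) (hg_nonneg : ∀ x, 0 ≤ g x) (hS : Measurable S)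
    (hS' : Measurable S') (hS'_nonneg : ∀ x, 0 ≤ S' x) (hle : ∀ x, S' x ≤ S x)
    (hbound : ∀ x, f x - g x ≤ √(K * (S x - S' x))) {I : ℝ≥0∞} (hI : I ≠ ∞)
    (hIS' : I ≤ ∫⁻ x, ENNReal.ofReal (S' x) ∂ν) :
    ∫⁻ x, ENNReal.ofReal (f x) ∂ν ≤ ∫⁻ x, ENNReal.ofReal (g x) ∂ν +
      ENNReal.ofReal √K * (∫⁻ x, ENNReal.ofReal (S x) ∂ν - I) ^ ((1 : ℝ) / 2) := by
  have hpoint (x : X) : ENNReal.ofReal (f x) ≤ ENNReal.ofReal (g x) +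
      ENNReal.ofReal √K * ENNReal.ofReal (S x - S' x) ^ ((1 : ℝ) / 2) := by
    rw [ENNReal.ofReal_rpow_of_nonneg (sub_nonneg.2 (hle x)) one_half_pos.le,
      ← Real.sqrt_eq_rpow, ← ENNReal.ofReal_mul (Real.sqrt_nonneg _),
      ← Real.sqrt_mul' _ (sub_nonneg.2 (hle x)),
      ← ENNReal.ofReal_add (hg_nonneg x) (Real.sqrt_nonneg _)]
    exact ENNReal.ofReal_le_ofReal (sub_le_iff_le_add'.1 (hbound x))
  have hregret : ∫⁻ x, ENNReal.ofReal (S x - S' x) ∂ν ≤ ∫⁻ x, ENNReal.ofReal (S x) ∂ν - I := by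
    refine ENNReal.le_sub_of_add_le_right hI ((add_le_add_right hIS' _).trans_eq ?_)
    rw [← lintegral_add_left (by fun_prop)]
    refine lintegral_congr fun x => ?_
    rw [← ENNReal.ofReal_add (sub_nonneg.2 (hle x)) (hS'_nonneg x), sub_add_cancel]
  calc ∫⁻ x, ENNReal.ofReal (f x) ∂ν
      ≤ ∫⁻ x, (ENNReal.ofReal (g x) +
          ENNReal.ofReal √K * ENNReal.ofReal (S x - S' x) ^ ((1 : ℝ) / 2)) ∂ν :=
        lintegral_mono hpoint
    _ = ∫⁻ x, ENNReal.ofReal (g x) ∂ν +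
          ENNReal.ofReal √K * ∫⁻ x, ENNReal.ofReal (S x - S' x) ^ ((1 : ℝ) / 2) ∂ν := by
        rw [lintegral_add_left (by fun_prop), lintegral_const_mul _ (by fun_prop)]
    _ ≤ _ := by
        gcongr
        exact (lintegral_rpow_half_le ν (by fun_prop)).trans
          (ENNReal.rpow_le_rpow hregret one_half_pos.le)

section CostVector

/-- The loss of the predictor `h`, at index `0`, followed by the costs of the experts: the vector
that both the deferral loss and the single-stage surrogate depend on linearly. -/
def costVec {X : Type*} {n : ℕ} (L : ℝ → ℝ → ℝ) (c : Fin n → X × ℝ → ℝ) (h : X → ℝ) (z : X × ℝ) :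
    Fin (n + 1) → ℝ :=
  Fin.cons (L (h z.1) z.2) fun j => c j z

variable {n : ℕ} {L : ℝ → ℝ → ℝ} {c : Fin n → X × ℝ → ℝ} {h h' : X → ℝ}

lemma defLoss_eq_dotProduct {X : Type*} (L : ℝ → ℝ → ℝ) (c : Fin n → X × ℝ → ℝ)
    (sel : (Fin (n + 1) → ℝ) → Fin (n + 1)) (h : X → ℝ) (r : X → Fin (n + 1) → ℝ) (z : X × ℝ) :
    defLoss n L c sel h r z = Pi.single (sel (r z.1)) 1 ⬝ᵥ costVec L c h z := by
  rw [single_one_dotProduct, defLoss]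
  cases sel (r z.1) using Fin.cases <;> simp [costVec, Fin.succ_ne_zero, (Fin.succ_ne_zero _).symm]

lemma surLoss_eq_dotProduct {X : Type*} (L : ℝ → ℝ → ℝ) (c : Fin n → X × ℝ → ℝ)
    (ℓ : (Fin (n + 1) → ℝ) → Fin (n + 1) → ℝ) (h : X → ℝ) (r : X → Fin (n + 1) → ℝ) (z : X × ℝ) :
    surLoss n L c ℓ h r z = surrogateWeight ℓ (r z.1) ⬝ᵥ costVec L c h z := by
  simp only [surrogateWeight_dotProduct, complementCost_eq_sub, surLoss, costVec,
    Fin.sum_univ_succ, Fin.cons_zero, Fin.cons_succ, sum_erase_eq_sub (mem_univ _),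
    ← _root_.add_sub_assoc, _root_.add_sub_cancel_left]

lemma measurable_costVec (hL : Measurable fun p : ℝ × ℝ => L p.1 p.2) (hc : ∀ j, Measurable (c j))
    (hh : Measurable h) : Measurable (costVec L c h) :=
  measurable_pi_lambda _ <| Fin.cases
    (hL.comp ((hh.comp measurable_fst).prodMk measurable_snd)) hc

lemma costVec_mem_Icc {X : Type*} {c : Fin n → X × ℝ → ℝ} {lbar : ℝ} {C : Fin n → ℝ}
    (hL : ∀ y' y, L y' y ∈ Set.Icc 0 lbar) (hc : ∀ j z, c j z ∈ Set.Icc 0 (C j)) (h : X → ℝ)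
    (z : X × ℝ) : costVec L c h z ∈ Set.Icc 0 (Fin.cons lbar C) :=
  ⟨Fin.cases (hL _ _).1 fun j => (hc j z).1, Fin.cases (hL _ _).2 fun j => (hc j z).2⟩

lemma condMean_costVec_congr (κ : Kernel X ℝ) {x : X} (hx : h x = h' x) :
    condMean κ (costVec L c h) x = condMean κ (costVec L c h') x := by
  simp only [condMean, costVec, hx, funext_iff, implies_true]

lemma exists_condMean_costVec_le (κ : Kernel X ℝ) [IsSFiniteKernel κ] (hh : Measurable h)
    (hh' : Measurable h') (hv : Measurable (costVec L c h)) (hv' : Measurable (costVec L c h')) :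
    ∃ g : X → ℝ, Measurable g ∧ condMean κ (costVec L c g) ≤ condMean κ (costVec L c h) ∧
      condMean κ (costVec L c g) ≤ condMean κ (costVec L c h') := by
  set a := fun x => condMean κ (costVec L c h) x 0
  set a' := fun x => condMean κ (costVec L c h') x 0
  refine ⟨fun x => if a' x < a x then h' x else h x,
    .ite (measurableSet_lt ((measurable_pi_apply 0).comp (measurable_condMean κ hv'))
      ((measurable_pi_apply 0).comp (measurable_condMean κ hv))) hh' hh, fun x => ?_, fun x => ?_⟩
  · by_cases hx : a' x < a x
    · rw [condMean_costVec_congr (h' := h') κ (if_pos hx)]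
      exact Fin.cases hx.le fun _ => le_rfl
    · rw [condMean_costVec_congr (h' := h) κ (if_neg hx)]
  · by_cases hx : a' x < a x
    · rw [condMean_costVec_congr (h' := h') κ (if_pos hx)]
    · rw [condMean_costVec_congr (h' := h) κ (if_neg hx)]
      exact Fin.cases (not_lt.1 hx) fun _ => le_rfl

variable {b : Fin (n + 1) → ℝ} {r : X → Fin (n + 1) → ℝ}

lemma genErr_defLoss (μ : Measure (X × ℝ)) [IsFiniteMeasure μ] (hv : Measurable (costVec L c h))
    (hb : ∀ z, costVec L c h z ∈ Set.Icc 0 b) {sel : (Fin (n + 1) → ℝ) → Fin (n + 1)}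
    (hsel : Measurable sel) (hr : Measurable r) :
    genErr μ (defLoss n L c sel h r) =
      ∫⁻ x, ENNReal.ofReal (condMean μ.condKernel (costVec L c h) x (sel (r x))) ∂μ.fst := by
  have hw : Measurable fun x => (Pi.single (sel (r x)) 1 : Fin (n + 1) → ℝ) :=
    (measurable_of_finite fun k => (Pi.single k 1 : Fin (n + 1) → ℝ)).comp (hsel.comp hr)
  have hw_nonneg (x : X) : (0 : Fin (n + 1) → ℝ) ≤ Pi.single (sel (r x)) 1 :=
    Pi.single_nonneg.2 zero_le_one
  rw [funext (defLoss_eq_dotProduct L c sel h r), genErr_dotProduct μ hw hw_nonneg hv hb]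
  simp only [single_one_dotProduct]

lemma genErr_surLoss_ellLog (μ : Measure (X × ℝ)) [IsFiniteMeasure μ]
    (hv : Measurable (costVec L c h)) (hb : ∀ z, costVec L c h z ∈ Set.Icc 0 b)
    (hr : Measurable r) :
    genErr μ (surLoss n L c (ellLog n) h r) = ∫⁻ x, ENNReal.ofReal
      (surrogateWeight (ellLog n) (r x) ⬝ᵥ condMean μ.condKernel (costVec L c h) x) ∂μ.fst := by
  rw [funext (surLoss_eq_dotProduct L c (ellLog n) h r)]
  exact genErr_dotProduct μ (measurable_surrogateWeight_ellLog.comp hr)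
    (fun x => surrogateWeight_ellLog_nonneg (r x)) hv hb

end CostVector

section ExcessError

variable {n : ℕ} {L : ℝ → ℝ → ℝ} {c : Fin n → X × ℝ → ℝ} {b : Fin (n + 1) → ℝ}

/-- The starred quantity: the best generalization error, over all measurable predictors and
deferral functions, of the loss that `ℓ` assigns to each such pair. -/
noncomputable def optGenErr (μ : Measure (X × ℝ))
    (ℓ : (X → ℝ) → (X → Fin (n + 1) → ℝ) → X × ℝ → ℝ) : ℝ≥0∞ :=
  ⨅ (h : X → ℝ) (_ : Measurable h) (r : X → Fin (n + 1) → ℝ) (_ : Measurable r), genErr μ (ℓ h r)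

lemma optGenErr_le (μ : Measure (X × ℝ)) (ℓ : (X → ℝ) → (X → Fin (n + 1) → ℝ) → X × ℝ → ℝ)
    {h : X → ℝ} (hh : Measurable h) {r : X → Fin (n + 1) → ℝ} (hr : Measurable r) :
    optGenErr μ ℓ ≤ genErr μ (ℓ h r) :=
  iInf₂_le_of_le h hh (iInf₂_le r hr)

lemma optGenErr_surLoss_ellLog_ne_top (μ : Measure (X × ℝ)) [IsFiniteMeasure μ]
    (hb : ∀ z, costVec L c 0 z ∈ Set.Icc 0 b) : optGenErr μ (surLoss n L c (ellLog n)) ≠ ∞ := by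
  have hbound (z : X × ℝ) : surLoss n L c (ellLog n) 0 0 z ≤ surrogateWeight (ellLog n) 0 ⬝ᵥ b := by
    rw [surLoss_eq_dotProduct]
    exact dotProduct_le_dotProduct_of_nonneg_left (hb z).2 (surrogateWeight_ellLog_nonneg 0)
  refine ne_top_of_le_ne_top ?_
    ((optGenErr_le μ _ measurable_zero measurable_zero).trans
      (lintegral_mono fun z => ENNReal.ofReal_le_ofReal (hbound z)))
  rw [lintegral_const]
  finiteness

/-- The comparator, with predictor `h'` and choices `m`, is improved against `h` and `r` in two
ways: the predictor becomes the better of `h` and `h'` at every point, and the scores of `r` are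
rebalanced towards `m`. -/
lemma exists_improved_comparator (hn : 1 ≤ n) (κ : Kernel X ℝ) [IsMarkovKernel κ]
    (hv : ∀ h : X → ℝ, Measurable h → Measurable (costVec L c h))
    (hb : ∀ (h : X → ℝ) z, costVec L c h z ∈ Set.Icc 0 b)
    {h h' : X → ℝ} (hh : Measurable h) (hh' : Measurable h') {r : X → Fin (n + 1) → ℝ}
    (hr : Measurable r) {k m : X → Fin (n + 1)} (hk : Measurable k) (hm : Measurable m)
    (hmax : ∀ x j, r x j ≤ r x (k x)) :
    ∃ (g : X → ℝ) (q : X → Fin (n + 1) → ℝ), Measurable g ∧ Measurable q ∧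
      (∀ x, surrogateWeight (ellLog n) (q x) ⬝ᵥ condMean κ (costVec L c g) x ≤
        surrogateWeight (ellLog n) (r x) ⬝ᵥ condMean κ (costVec L c h) x) ∧
      ∀ x, condMean κ (costVec L c h) x (k x) - condMean κ (costVec L c h') x (m x) ≤
        √(2 * (n * ∑ i, b i) *
          (surrogateWeight (ellLog n) (r x) ⬝ᵥ condMean κ (costVec L c h) x -
            surrogateWeight (ellLog n) (q x) ⬝ᵥ condMean κ (costVec L c g) x)) := by
  obtain ⟨g, hg, hgh, hgh'⟩ := exists_condMean_costVec_le κ hh hh' (hv h hh) (hv h' hh')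
  set v := fun h => condMean κ (costVec L c h)
  have hv_mem {h : X → ℝ} (hh : Measurable h) (x : X) : v h x ∈ Set.Icc 0 b :=
    condMean_mem_Icc κ (hv h hh) (hb h) x
  have hle (x : X) :
      surrogateWeight (ellLog n) (improvedScores (v g x) (r x) (k x) (m x)) ⬝ᵥ v g x ≤
        surrogateWeight (ellLog n) (r x) ⬝ᵥ v h x :=
    surrogate_improvedScores_le_of_le (hmax x _) (hv_mem hg x).1 (hgh x)
  refine ⟨g, fun x => improvedScores (v g x) (r x) (k x) (m x), hg,
    measurable_improvedScores (measurable_condMean κ (hv g hg)) hr hk hm, hle, fun x => ?_⟩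
  calc v h x (k x) - v h' x (m x)
      ≤ v h x (k x) - v g x (m x) := sub_le_sub_left (hgh' x _) _
    _ ≤ √(2 * (n * ∑ i, v h x i) * _) :=
        selected_cost_sub_le_sqrt hn (hmax x) (hv_mem hg x).1 (hgh x) fun _ => rfl
    _ ≤ _ := by
        gcongr
        · exact sub_nonneg.2 (hle x)
        · exact (hv_mem hh x).2 _

lemma genErr_defLoss_le_add (hn : 1 ≤ n)
    (hv : ∀ h : X → ℝ, Measurable h → Measurable (costVec L c h))
    (hb : ∀ (h : X → ℝ) z, costVec L c h z ∈ Set.Icc 0 b)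
    {sel : (Fin (n + 1) → ℝ) → Fin (n + 1)} (hsel_meas : Measurable sel)
    (hsel : ∀ (s : Fin (n + 1) → ℝ) j, s j ≤ s (sel s))
    (μ : Measure (X × ℝ)) [IsProbabilityMeasure μ]
    {h h' : X → ℝ} (hh : Measurable h) (hh' : Measurable h')
    {r r' : X → Fin (n + 1) → ℝ} (hr : Measurable r) (hr' : Measurable r') :
    genErr μ (defLoss n L c sel h r) ≤ genErr μ (defLoss n L c sel h' r') +
      ENNReal.ofReal √(2 * (n * ∑ i, b i)) *
        (genErr μ (surLoss n L c (ellLog n) h r) - optGenErr μ (surLoss n L c (ellLog n))) ^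
          ((1 : ℝ) / 2) := by
  set κ := μ.condKernel
  have hv_meas {h : X → ℝ} (hh : Measurable h) : Measurable (condMean κ (costVec L c h)) :=
    measurable_condMean κ (hv h hh)
  have hv_nonneg {h : X → ℝ} (hh : Measurable h) (x : X) : 0 ≤ condMean κ (costVec L c h) x :=
    (condMean_mem_Icc κ (hv h hh) (hb h) x).1
  have hsur_meas {h : X → ℝ} {r : X → Fin (n + 1) → ℝ} (hh : Measurable h) (hr : Measurable r) :
      Measurable fun x => surrogateWeight (ellLog n) (r x) ⬝ᵥ condMean κ (costVec L c h) x :=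
    measurable_dotProduct (measurable_surrogateWeight_ellLog.comp hr) (hv_meas hh)
  obtain ⟨g, q, hg, hq, hle, hregret⟩ := exists_improved_comparator hn κ hv hb hh hh' hr
    (hsel_meas.comp hr) (hsel_meas.comp hr') fun x => hsel (r x)
  rw [genErr_defLoss μ (hv h hh) (hb h) hsel_meas hr,
    genErr_defLoss μ (hv h' hh') (hb h') hsel_meas hr', genErr_surLoss_ellLog μ (hv h hh) (hb h) hr]
  exact lintegral_ofReal_le_add_sqrt μ.fst
    (measurable_apply_fin (hv_meas hh') (hsel_meas.comp hr')) (fun x => hv_nonneg hh' x _)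
    (hsur_meas hh hr) (hsur_meas hg hq)
    (fun x => dotProduct_nonneg_of_nonneg (surrogateWeight_ellLog_nonneg _) (hv_nonneg hg x))
    hle hregret (optGenErr_surLoss_ellLog_ne_top μ (hb 0))
    ((optGenErr_le μ _ hg hq).trans_eq (genErr_surLoss_ellLog μ (hv g hg) (hb g) hq))

end ExcessError

theorem single_stage_logistic_excess_error_bound_general {X : Type*} [MeasurableSpace X]
    (nE : ℕ) (hnE : 1 ≤ nE) (lbar : ℝ) (C : Fin nE → ℝ)
    (L : ℝ → ℝ → ℝ) (hLmeas : Measurable fun p : ℝ × ℝ => L p.1 p.2)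
    (hL : ∀ y' y, L y' y ∈ Set.Icc 0 lbar)
    (c : Fin nE → X × ℝ → ℝ) (hcmeas : ∀ j, Measurable (c j))
    (hc : ∀ j z, c j z ∈ Set.Icc 0 (C j))
    (sel : (Fin (nE + 1) → ℝ) → Fin (nE + 1)) (hselmeas : Measurable sel)
    (hsel : ∀ (s : Fin (nE + 1) → ℝ) (j : Fin (nE + 1)), s j ≤ s (sel s))
    (μ : Measure (X × ℝ)) [IsProbabilityMeasure μ]
    (h : X → ℝ) (hh : Measurable h) (r : X → Fin (nE + 1) → ℝ) (hr : Measurable r) :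
    genErr μ (defLoss nE L c sel h r) - optGenErr μ (defLoss nE L c sel) ≤
      ENNReal.ofReal (Real.sqrt (2 * nE) * (lbar + ∑ j, C j) ^ ((1 : ℝ) / 2)) *
        (genErr μ (surLoss nE L c (ellLog nE) h r) -
          optGenErr μ (surLoss nE L c (ellLog nE))) ^ ((1 : ℝ) / 2) := by
  have hconst : √(2 * nE) * (lbar + ∑ j, C j) ^ ((1 : ℝ) / 2) =
      √(2 * (nE * ∑ i, (Fin.cons lbar C : Fin (nE + 1) → ℝ) i)) := by
    rw [Fin.sum_cons, ← Real.sqrt_eq_rpow, ← mul_assoc,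
      Real.sqrt_mul (mul_nonneg zero_le_two nE.cast_nonneg)]
  rw [hconst, tsub_le_iff_right, add_comm, ← tsub_le_iff_right]
  refine le_iInf₂ fun h' hh' => le_iInf₂ fun r' hr' => ?_
  rw [tsub_le_iff_right]
  exact genErr_defLoss_le_add hnE (fun _ => measurable_costVec hLmeas hcmeas)
    (costVec_mem_Icc hL hc) hselmeas hsel μ hh hh' hr hr'

/-- Corollary 3.3: excess error bound for the single-stage logistic
surrogate. -/
theorem single_stage_logistic_excess_error_bound {X : Type*} [MeasurableSpace X]
    (nE : ℕ) (hnE : 1 ≤ nE)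
    (lbar : ℝ) (hlbar : 0 < lbar)
    (C : Fin nE → ℝ) (hC : ∀ j, 0 < C j)
    (L : ℝ → ℝ → ℝ) (hLmeas : Measurable fun p : ℝ × ℝ => L p.1 p.2)
    (hL : ∀ y' y, L y' y ∈ Set.Icc 0 lbar)
    (c : Fin nE → X × ℝ → ℝ) (hcmeas : ∀ j, Measurable (c j))
    (hc : ∀ j z, c j z ∈ Set.Ioc 0 (C j))
    (sel : (Fin (nE + 1) → ℝ) → Fin (nE + 1)) (hselmeas : Measurable sel)
    (hsel : ∀ (s : Fin (nE + 1) → ℝ) (j : Fin (nE + 1)), s j ≤ s (sel s))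
    (μ : Measure (X × ℝ)) [IsProbabilityMeasure μ]
    (h : X → ℝ) (hh : Measurable h)
    (r : X → Fin (nE + 1) → ℝ) (hr : Measurable r) :
    genErr μ (defLoss nE L c sel h r)
        - (⨅ (h' : X → ℝ) (_ : Measurable h') (r' : X → Fin (nE + 1) → ℝ)
            (_ : Measurable r'), genErr μ (defLoss nE L c sel h' r'))
      ≤ max
          (genErr μ (surLoss nE L c (ellLog nE) h r)
            - ⨅ (h' : X → ℝ) (_ : Measurable h') (r' : X → Fin (nE + 1) → ℝ)
                (_ : Measurable r'), genErr μ (surLoss nE L c (ellLog nE) h' r'))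
          (ENNReal.ofReal (Real.sqrt (2 * nE) * (lbar + ∑ j, C j) ^ ((1 : ℝ) / 2)) *
            (genErr μ (surLoss nE L c (ellLog nE) h r)
              - ⨅ (h' : X → ℝ) (_ : Measurable h') (r' : X → Fin (nE + 1) → ℝ)
                  (_ : Measurable r'),
                    genErr μ (surLoss nE L c (ellLog nE) h' r')) ^ ((1 : ℝ) / 2)) :=
  (single_stage_logistic_excess_error_bound_general nE hnE lbar C L hLmeas hL c hcmeas
    (fun j z => Set.Ioc_subset_Icc_self (hc j z)) sel hselmeas hsel μ h hh r hr).trans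
    (le_max_right _ _)
end

section
/- (Corollary 4.2: two-stage excess error bound for the deferral function.) Fix a measurable predictor h : X → ℝ. Assume there exist α ∈ (0,1] and β > 0 such that for every probability measure ν on X×{0,...,n_e} and every measurable r : X → ℝ^{n_e+1}, E_{ℓ01}(r) − E*_{ℓ01} ≤ β·(E_ℓ(r) − E*_ℓ)^α. Then for every probability measure μ on X×ℝ and every measurable r : X → ℝ^{n_e+1}, E_{L^h_def}(r) − inf_{r' measurable} E_{L^h_def}(r') ≤ (n_e·(l̄ + Σ_{j=1}^{n_e} C_j))^{1−α}·β·(E_{L^h_ℓ}(r) − inf_{r' measurable} E_{L^h_ℓ}(r'))^α. -/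
open MeasureTheory Finset ENNReal

variable {X : Type*}

variable [MeasurableSpace X]

/-!
Cost-sensitive prediction reduces to multi-class classification. Give an instance `z` each label `j`
with weight `w j z`, the sum of the costs of the labels other than `j`. The weight of the labels
that differ from a prediction `a` is `k a z` plus a quantity independent of `a`, while the
`w`-weighted sum of the surrogate `ℓ` is the two-stage surrogate loss. For the resulting measure on
`X × {0, …, n_e}`, of total mass `Q ≤ n_e (l̄ + ∑ C_j)`, the two excess errors are therefore the
misclassification and surrogate excess errors of a multi-class problem. Applying the consistency
bound to the measure divided by `Q` gives the factor `Q · Q ^ (-α)`.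
-/

/-- The excess error at `i`: the gap between `E i` and the best error in the family `E`.
It is `0` when all errors are infinite, since `∞ - ∞ = 0`. -/
noncomputable def excess {ι : Type*} (E : ι → ℝ≥0∞) (i : ι) : ℝ≥0∞ :=
  E i - ⨅ j, E j

section Excess

variable {ι : Type*}

lemma excess_const_add {a : ℝ≥0∞} (ha : a ≠ ∞) (E : ι → ℝ≥0∞) (i : ι) :
    excess (fun j => a + E j) i = excess E i := by
  rw [excess, ← ENNReal.add_iInf, ENNReal.add_sub_add_eq_sub_left ha, excess]

lemma excess_const_mul {a : ℝ≥0∞} (ha₀ : a ≠ 0) (ha : a ≠ ∞) (E : ι → ℝ≥0∞) (i : ι) :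
    excess (fun j => a * E j) i = a * excess E i := by
  rw [excess, ← ENNReal.mul_iInf_of_ne ha₀ ha, ← ENNReal.mul_sub fun _ _ => ha, excess]

lemma excess_measure_le_of_forall_isProbabilityMeasure {W : Type*} [MeasurableSpace W]
    {s : ι → Set W} {G : ι → W → ℝ≥0∞} {Γ : ℝ≥0∞ → ℝ≥0∞} {i : ι}
    (hΓ : ∀ ν : Measure W, IsProbabilityMeasure ν →
      excess (fun j => ν (s j)) i ≤ Γ (excess (fun j => ∫⁻ w, G j w ∂ν) i))
    (ρ : Measure W) [IsFiniteMeasure ρ] :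
    excess (fun j => ρ (s j)) i
      ≤ ρ Set.univ * Γ ((ρ Set.univ)⁻¹ * excess (fun j => ∫⁻ w, G j w ∂ρ) i) := by
  rcases eq_zero_or_neZero ρ with rfl | _
  · simp [excess]
  have hρ₀ : ρ Set.univ ≠ 0 := NeZero.ne _
  have hρ : ρ Set.univ ≠ ∞ := measure_ne_top ρ _
  have hν := hΓ ((ρ Set.univ)⁻¹ • ρ) inferInstance
  simp only [Measure.smul_apply, lintegral_smul_measure, smul_eq_mul] at hν
  rw [excess_const_mul (ENNReal.inv_ne_zero.2 hρ) (ENNReal.inv_ne_top.2 hρ₀),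
    excess_const_mul (ENNReal.inv_ne_zero.2 hρ) (ENNReal.inv_ne_top.2 hρ₀)] at hν
  exact (ENNReal.inv_mul_le_iff hρ₀ hρ).1 hν

end Excess

section EraseSums

lemma sum_sum_erase {J M : Type*} [DecidableEq J] [AddCommMonoid M] (s : Finset J) (g : J → M) :
    ∑ j ∈ s, ∑ i ∈ s.erase j, g i = (#s - 1) • ∑ i ∈ s, g i := by
  rw [sum_comm' (t' := s) (s' := fun i => s.erase i) (by grind), ← sum_nsmul]
  exact sum_congr rfl fun i hi => by rw [sum_const, card_erase_of_mem hi]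

lemma sum_erase_sum_erase {J M : Type*} [DecidableEq J] [AddCommMonoid M] {s : Finset J}
    (hs : s.Nontrivial) (g : J → M) {a : J} (ha : a ∈ s) :
    ∑ j ∈ s.erase a, ∑ i ∈ s.erase j, g i = (#s - 2) • ∑ i ∈ s, g i + g a := by
  have hsplit : ∀ j ∈ s.erase a,
      ∑ i ∈ s.erase j, g i = g a + ∑ i ∈ (s.erase a).erase j, g i := fun j hj => by
    rw [erase_right_comm, add_sum_erase _ _ (mem_erase.2 ⟨(ne_of_mem_erase hj).symm, ha⟩)]
  have hcard : #s - 1 = (#s - 2) + 1 := by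
    have := one_lt_card_iff_nontrivial.2 hs
    omega
  rw [sum_congr rfl hsplit, sum_add_distrib, sum_sum_erase, sum_const, card_erase_of_mem ha,
    ← add_sum_erase s g ha, hcard, Nat.add_sub_cancel, succ_nsmul, nsmul_add]
  abel

lemma sum_univ_erase_zero {M : Type*} [AddCommMonoid M] {n : ℕ} (g : Fin (n + 1) → M) :
    ∑ i ∈ univ.erase 0, g i = ∑ i : Fin n, g i.succ := by
  simp [Fin.univ_succ]

lemma sum_univ_erase_succ {M : Type*} [AddCommMonoid M] {n : ℕ} (g : Fin (n + 1) → M)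
    (j : Fin n) :
    ∑ i ∈ univ.erase j.succ, g i = g 0 + ∑ i ∈ univ.erase j, g i.succ := by
  simp [← filter_ne', sum_filter, Fin.sum_univ_succ, (Fin.succ_ne_zero j).symm]

end EraseSums

section CostSensitive

variable {Z J ι : Type*} [Fintype J] [DecidableEq J]

/-- The total cost of all labels other than `j`. It is the weight that label `j` receives when
cost-sensitive prediction is reduced to multi-class classification. -/
noncomputable def complementaryCost (k : J → Z → ℝ≥0∞) (j : J) (z : Z) : ℝ≥0∞ :=
  ∑ i ∈ univ.erase j, k i z

variable [MeasurableSpace Z]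

lemma measurable_complementaryCost {k : J → Z → ℝ≥0∞} (hk : ∀ j, Measurable (k j)) (j : J) :
    Measurable (complementaryCost k j) :=
  Finset.measurable_fun_sum _ fun i _ => hk i

variable [MeasurableSpace J]

/-- The multi-class problem with features in `X` and labels in `J` induced by the costs `k`: an
instance `z` with features `π z` carries each label `j` with weight `complementaryCost k j z`. The
measure is left unnormalized, so that it depends linearly on `μ`. -/
noncomputable def labelMeasure (π : Z → X) (k : J → Z → ℝ≥0∞) (μ : Measure Z) :
    Measure (X × J) :=
  ∑ j, (μ.withDensity (complementaryCost k j)).map fun z => (π z, j)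

variable {π : Z → X} {k : J → Z → ℝ≥0∞}

lemma lintegral_labelMeasure (hπ : Measurable π) (hk : ∀ j, Measurable (k j)) (μ : Measure Z)
    {G : X × J → ℝ≥0∞} (hG : Measurable G) :
    ∫⁻ p, G p ∂labelMeasure π k μ
      = ∫⁻ z, ∑ j, complementaryCost k j z * G (π z, j) ∂μ := by
  have hmk (j : J) : Measurable fun z => (π z, j) := hπ.prodMk measurable_const
  have hw := measurable_complementaryCost hk
  have hwG (j : J) : Measurable fun z => complementaryCost k j z * G (π z, j) :=
    (hw j).mul (hG.comp (hmk j))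
  rw [labelMeasure, lintegral_finsetSum_measure, lintegral_finsetSum _ fun j _ => hwG j]
  refine sum_congr rfl fun j _ => ?_
  rw [lintegral_map hG (hmk j)]
  exact lintegral_withDensity_eq_lintegral_mul μ (hw j) (hG.comp (hmk j))

lemma labelMeasure_univ (hπ : Measurable π) (hk : ∀ j, Measurable (k j)) (μ : Measure Z) :
    labelMeasure π k μ Set.univ = (Fintype.card J - 1 : ℕ) * ∫⁻ z, ∑ j, k j z ∂μ := by
  rw [← lintegral_one, lintegral_labelMeasure hπ hk μ measurable_const,
    ← lintegral_const_mul _ (Finset.measurable_fun_sum _ fun j _ => hk j)]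
  simp only [mul_one, complementaryCost, sum_sum_erase, card_univ, nsmul_eq_mul]

lemma labelMeasure_setOf_ne [Nontrivial J] [MeasurableSingletonClass J] (hπ : Measurable π)
    (hk : ∀ j, Measurable (k j)) (μ : Measure Z) {f : X → J} (hf : Measurable f) :
    labelMeasure π k μ {p | f p.1 ≠ p.2}
      = (Fintype.card J - 2 : ℕ) * ∫⁻ z, ∑ j, k j z ∂μ + ∫⁻ z, k (f (π z)) z ∂μ := by
  have hs : MeasurableSet {p : X × J | f p.1 ≠ p.2} :=
    (measurableSet_eq_fun (hf.comp measurable_fst) measurable_snd).compl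
  rw [← lintegral_indicator_one hs, lintegral_labelMeasure hπ hk μ (measurable_one.indicator hs),
    ← lintegral_const_mul _ (Finset.measurable_fun_sum _ fun j _ => hk j),
    ← lintegral_add_left ((Finset.measurable_fun_sum _ fun j _ => hk j).const_mul _)]
  refine lintegral_congr fun z => ?_
  calc ∑ j, complementaryCost k j z * {p : X × J | f p.1 ≠ p.2}.indicator 1 (π z, j)
      = ∑ j ∈ univ.erase (f (π z)), complementaryCost k j z := by
        simp [Set.indicator_apply, ← filter_ne, sum_filter]
    _ = (Fintype.card J - 2 : ℕ) * ∑ j, k j z + k (f (π z)) z := by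
        rw [← nsmul_eq_mul, ← card_univ]
        exact sum_erase_sum_erase univ_nontrivial (k · z) (mem_univ _)

lemma excess_cost_le_of_forall_isProbabilityMeasure [Nontrivial J]
    [MeasurableSingletonClass J] (hπ : Measurable π) (hk : ∀ j, Measurable (k j))
    {μ : Measure Z} (hμ : ∫⁻ z, ∑ j, k j z ∂μ ≠ ∞)
    {f : ι → X → J} (hf : ∀ i, Measurable (f i)) {G : ι → X × J → ℝ≥0∞}
    (hG : ∀ i, Measurable (G i)) {Γ : ℝ≥0∞ → ℝ≥0∞} {i : ι}
    (hΓ : ∀ ν : Measure (X × J), IsProbabilityMeasure ν →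
      excess (fun i' => ν {p | f i' p.1 ≠ p.2}) i ≤ Γ (excess (fun i' => ∫⁻ p, G i' p ∂ν) i)) :
    excess (fun i' => ∫⁻ z, k (f i' (π z)) z ∂μ) i
      ≤ (Fintype.card J - 1 : ℕ) * (∫⁻ z, ∑ j, k j z ∂μ) *
        Γ (((Fintype.card J - 1 : ℕ) * ∫⁻ z, ∑ j, k j z ∂μ)⁻¹ *
          excess (fun i' => ∫⁻ z, ∑ j, complementaryCost k j z * G i' (π z, j) ∂μ) i) := by
  have hfin (n : ℕ) : n * ∫⁻ z, ∑ j, k j z ∂μ ≠ ∞ :=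
    ENNReal.mul_ne_top (ENNReal.natCast_ne_top n) hμ
  have : IsFiniteMeasure (labelMeasure π k μ) :=
    ⟨by rw [labelMeasure_univ hπ hk]; exact (hfin _).lt_top⟩
  have h := excess_measure_le_of_forall_isProbabilityMeasure hΓ (labelMeasure π k μ)
  simp only [labelMeasure_univ hπ hk, labelMeasure_setOf_ne hπ hk μ (hf _),
    lintegral_labelMeasure hπ hk μ (hG _)] at h
  rwa [excess_const_add (hfin _)] at h

end CostSensitive

lemma mul_inv_mul_rpow_le {Q M : ℝ≥0∞} (hQM : Q ≤ M) (hQ : Q ≠ ∞) {α : ℝ} (hα₀ : 0 ≤ α)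
    (hα₁ : α ≤ 1) (t : ℝ≥0∞) : Q * (Q⁻¹ * t) ^ α ≤ M ^ (1 - α) * t ^ α := by
  rcases eq_or_ne Q 0 with rfl | hQ₀
  · simp
  calc Q * (Q⁻¹ * t) ^ α = Q ^ (1 - α) * t ^ α := by
        rw [ENNReal.mul_rpow_of_nonneg _ _ hα₀, ENNReal.inv_rpow, ENNReal.rpow_sub _ _ hQ₀ hQ,
          ENNReal.rpow_one, div_eq_mul_inv, mul_assoc]
    _ ≤ M ^ (1 - α) * t ^ α := by gcongr

theorem two_stage_excess_error_bound_second_stage_general {Z J ι : Type*} [MeasurableSpace Z]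
    [Fintype J] [DecidableEq J] [Nontrivial J] [MeasurableSpace J] [MeasurableSingletonClass J]
    {π : Z → X} (hπ : Measurable π) {k : J → Z → ℝ≥0∞} (hk : ∀ j, Measurable (k j))
    {μ : Measure Z} {M : ℝ≥0∞} (hM : M ≠ ∞)
    (hμ : (Fintype.card J - 1 : ℕ) * ∫⁻ z, ∑ j, k j z ∂μ ≤ M)
    {f : ι → X → J} (hf : ∀ i, Measurable (f i))
    {G : ι → X × J → ℝ≥0∞} (hG : ∀ i, Measurable (G i))
    {α : ℝ} (hα₀ : 0 ≤ α) (hα₁ : α ≤ 1) {b : ℝ≥0∞} {i : ι}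
    (hcons : ∀ ν : Measure (X × J), IsProbabilityMeasure ν →
      excess (fun i' => ν {p | f i' p.1 ≠ p.2}) i
        ≤ b * excess (fun i' => ∫⁻ p, G i' p ∂ν) i ^ α) :
    excess (fun i' => ∫⁻ z, k (f i' (π z)) z ∂μ) i
      ≤ M ^ (1 - α) * b *
        excess (fun i' => ∫⁻ z, ∑ j, complementaryCost k j z * G i' (π z, j) ∂μ) i ^ α := by
  have hcard : ((Fintype.card J - 1 : ℕ) : ℝ≥0∞) ≠ 0 :=
    Nat.cast_ne_zero.2 (Nat.sub_pos_of_lt Fintype.one_lt_card).ne'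
  have hcost : ∫⁻ z, ∑ j, k j z ∂μ ≠ ∞ := fun htop =>
    (ne_top_of_le_ne_top hM hμ) (by rw [htop, ENNReal.mul_top hcard])
  refine (excess_cost_le_of_forall_isProbabilityMeasure hπ hk hcost hf hG
    (Γ := fun t => b * t ^ α) hcons).trans ?_
  rw [mul_left_comm, mul_comm _ b, mul_assoc b]
  gcongr b * ?_
  exact mul_inv_mul_rpow_le hμ (ne_top_of_le_ne_top hM hμ) hα₀ hα₁ _

section Deferral

variable {X : Type*} {nE : ℕ} {L : ℝ → ℝ → ℝ} {c : Fin nE → X × ℝ → ℝ} {h : X → ℝ}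

/-- The costs of the `nE + 1` deferral options: option `0` is to predict with `h`, at the cost of
its loss, and option `j.succ` is to defer to expert `j`. -/
noncomputable def deferralCost (L : ℝ → ℝ → ℝ) (c : Fin nE → X × ℝ → ℝ) (h : X → ℝ) :
    Fin (nE + 1) → X × ℝ → ℝ≥0∞ :=
  Fin.cons (fun z => ENNReal.ofReal (L (h z.1) z.2)) fun j z => ENNReal.ofReal (c j z)

lemma measurable_deferralCost [MeasurableSpace X] (hL : Measurable fun p : ℝ × ℝ => L p.1 p.2)
    (hc : ∀ j, Measurable (c j)) (hh : Measurable h) (j : Fin (nE + 1)) :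
    Measurable (deferralCost L c h j) := by
  cases j using Fin.cases with
  | zero => exact (hL.comp ((hh.comp measurable_fst).prodMk measurable_snd)).ennreal_ofReal
  | succ j => exact (hc j).ennreal_ofReal

lemma sum_deferralCost_le {lbar : ℝ} {C : Fin nE → ℝ} (hL : ∀ y' y, L y' y ∈ Set.Icc 0 lbar)
    (hc : ∀ j z, c j z ∈ Set.Icc 0 (C j)) (z : X × ℝ) :
    ∑ j, deferralCost L c h j z ≤ ENNReal.ofReal (lbar + ∑ j, C j) := by
  simp only [deferralCost, Fin.sum_univ_succ, Fin.cons_zero, Fin.cons_succ]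
  rw [← ENNReal.ofReal_sum_of_nonneg fun j _ => (hc j z).1,
    ← ENNReal.ofReal_add (hL _ _).1 (sum_nonneg fun j _ => (hc j z).1)]
  gcongr with j
  exacts [(hL _ _).2, (hc j z).2]

lemma mul_lintegral_sum_deferralCost_le [MeasurableSpace X] {lbar : ℝ} {C : Fin nE → ℝ}
    (hL : ∀ y' y, L y' y ∈ Set.Icc 0 lbar) (hc : ∀ j z, c j z ∈ Set.Icc 0 (C j))
    (μ : Measure (X × ℝ)) [IsProbabilityMeasure μ] :
    nE * ∫⁻ z, ∑ j, deferralCost L c h j z ∂μ ≤ ENNReal.ofReal (nE * (lbar + ∑ j, C j)) := by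
  rw [ENNReal.ofReal_mul nE.cast_nonneg, ENNReal.ofReal_natCast]
  gcongr
  exact (lintegral_mono fun z => sum_deferralCost_le hL hc z).trans (by simp)

lemma ofReal_defLoss (sel : (Fin (nE + 1) → ℝ) → Fin (nE + 1)) (r : X → Fin (nE + 1) → ℝ)
    (z : X × ℝ) :
    ENNReal.ofReal (defLoss nE L c sel h r z) = deferralCost L c h (sel (r z.1)) z := by
  unfold defLoss
  cases sel (r z.1) using Fin.cases <;>
    simp [deferralCost, Fin.succ_ne_zero, (Fin.succ_ne_zero _).symm]

lemma ofReal_surLossTS (hL : ∀ y' y, 0 ≤ L y' y) (hc : ∀ j z, 0 ≤ c j z)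
    {ℓ : (Fin (nE + 1) → ℝ) → Fin (nE + 1) → ℝ} (hℓ : ∀ s j, 0 ≤ ℓ s j)
    (r : X → Fin (nE + 1) → ℝ) (z : X × ℝ) :
    ENNReal.ofReal (surLossTS nE L c ℓ h r z)
      = ∑ j, complementaryCost (deferralCost L c h) j z * ENNReal.ofReal (ℓ (r z.1) j) := by
  have hw₀ : 0 ≤ ∑ j, c j z := sum_nonneg fun j _ => hc j z
  have he (j : Fin nE) : 0 ≤ ∑ j' ∈ univ.erase j, c j' z := sum_nonneg fun j' _ => hc j' z
  have hw (j : Fin nE) : 0 ≤ L (h z.1) z.2 + ∑ j' ∈ univ.erase j, c j' z :=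
    add_nonneg (hL _ _) (he j)
  have hwℓ (j : Fin nE) := mul_nonneg (hw j) (hℓ (r z.1) j.succ)
  rw [surLossTS, ENNReal.ofReal_add (mul_nonneg hw₀ (hℓ _ _)) (sum_nonneg fun j _ => hwℓ j),
    ENNReal.ofReal_sum_of_nonneg fun j _ => hwℓ j, ENNReal.ofReal_mul hw₀, Fin.sum_univ_succ]
  simp only [ENNReal.ofReal_mul (hw _), ENNReal.ofReal_add (hL _ _) (he _),
    ENNReal.ofReal_sum_of_nonneg fun j _ => hc j z, complementaryCost, deferralCost,
    sum_univ_erase_zero, sum_univ_erase_succ, Fin.cons_zero, Fin.cons_succ]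

end Deferral

/-- Corollary 4.2: two-stage excess error bound for the deferral
function, with a fixed predictor `h`. -/
theorem two_stage_excess_error_bound_second_stage {X : Type*} [MeasurableSpace X]
    (nE : ℕ) (hnE : 1 ≤ nE)
    (lbar : ℝ) (hlbar : 0 < lbar)
    (C : Fin nE → ℝ) (hC : ∀ j, 0 < C j)
    (L : ℝ → ℝ → ℝ) (hLmeas : Measurable fun p : ℝ × ℝ => L p.1 p.2)
    (hL : ∀ y' y, L y' y ∈ Set.Icc 0 lbar)
    (c : Fin nE → X × ℝ → ℝ) (hcmeas : ∀ j, Measurable (c j))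
    (hc : ∀ j z, c j z ∈ Set.Ioc 0 (C j))
    (sel : (Fin (nE + 1) → ℝ) → Fin (nE + 1)) (hselmeas : Measurable sel)
    (hsel : ∀ (s : Fin (nE + 1) → ℝ) (j : Fin (nE + 1)), s j ≤ s (sel s))
    (ℓ : (Fin (nE + 1) → ℝ) → Fin (nE + 1) → ℝ)
    (hℓmeas : Measurable fun p : (Fin (nE + 1) → ℝ) × Fin (nE + 1) => ℓ p.1 p.2)
    (hℓ0 : ∀ s j, 0 ≤ ℓ s j)
    (hℓ1 : ∀ s j, j ≠ sel s → 1 ≤ ℓ s j)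
    (h : X → ℝ) (hh : Measurable h)
    (α β : ℝ) (hα : α ∈ Set.Ioc (0 : ℝ) 1) (hβ : 0 < β)
    (hcons : ∀ ν : Measure (X × Fin (nE + 1)), IsProbabilityMeasure ν →
      ∀ r : X → Fin (nE + 1) → ℝ, Measurable r →
        E01 nE sel ν r
            - (⨅ (r' : X → Fin (nE + 1) → ℝ) (_ : Measurable r'), E01 nE sel ν r')
          ≤ ENNReal.ofReal β *
            (Eell nE ℓ ν r
              - ⨅ (r' : X → Fin (nE + 1) → ℝ) (_ : Measurable r'), Eell nE ℓ ν r') ^ α)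
    (μ : Measure (X × ℝ)) [IsProbabilityMeasure μ]
    (r : X → Fin (nE + 1) → ℝ) (hr : Measurable r) :
    genErr μ (defLoss nE L c sel h r)
        - (⨅ (r' : X → Fin (nE + 1) → ℝ) (_ : Measurable r'),
            genErr μ (defLoss nE L c sel h r'))
      ≤ ENNReal.ofReal (((nE : ℝ) * (lbar + ∑ j, C j)) ^ (1 - α) * β) *
          (genErr μ (surLossTS nE L c ℓ h r)
            - ⨅ (r' : X → Fin (nE + 1) → ℝ) (_ : Measurable r'),
                genErr μ (surLossTS nE L c ℓ h r')) ^ α := by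
  have htotal := mul_lintegral_sum_deferralCost_le (h := h) hL
    (fun j z => Set.Ioc_subset_Icc_self (hc j z)) μ
  have hB : 0 ≤ nE * (lbar + ∑ j, C j) :=
    mul_nonneg nE.cast_nonneg (add_nonneg hlbar.le (sum_nonneg fun j _ => (hC j).le))
  have : NeZero nE := ⟨by omega⟩
  simp only [iInf_subtype', genErr, ofReal_defLoss,
    ofReal_surLossTS (fun y' y => (hL y' y).1) (fun j z => (hc j z).1.le) hℓ0] at hcons ⊢
  rw [ENNReal.ofReal_mul (by positivity), ← ENNReal.ofReal_rpow_of_nonneg hB (by linarith [hα.2])]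
  exact two_stage_excess_error_bound_second_stage_general measurable_fst
    (measurable_deferralCost hLmeas hcmeas hh) ENNReal.ofReal_ne_top
    (by simpa using htotal)
    (f := fun (r' : {r' : X → Fin (nE + 1) → ℝ // Measurable r'}) x => sel (r'.1 x))
    (fun r' => hselmeas.comp r'.2) (G := fun r' p => ENNReal.ofReal (ℓ (r'.1 p.1) p.2))
    (fun r' => (hℓmeas.comp ((r'.2.comp measurable_fst).prodMk measurable_snd)).ennreal_ofReal)
    hα.1.le hα.2 (i := ⟨r, hr⟩) fun ν hν => hcons ν hν r hr
end

section
/- (Corollary 5.2: single-expert single-stage excess error bound, general Γ.) Assume there exist α ∈ (0,1] and β > 0 such that for every probability measure ν on X×{−1,+1} and every measurable r : X → ℝ, E_{ℓ01}(r) − E*_{ℓ01} ≤ β·(E_Φ(r) − E*_Φ)^α. Then for every probability measure μ on X×ℝ, every measurable predictor h : X → ℝ and every measurable rejection function r : X → ℝ, E_{ℓ_def}(h,r) − E*_{ℓ_def} ≤ Γ̄(E_{ℓ_Φ}(h,r) − E*_{ℓ_Φ}), where Γ̄(t) = max{ t, (l̄ + c̄)^{1−α}·β·t^α }. -/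
open MeasureTheory ENNReal

/-- The binary label space `{−1, +1} ⊆ ℝ`. -/
def PMOne : Set ℝ := {-1, 1}

/-- `sign(u) = +1` if `u > 0` and `−1` otherwise. -/
noncomputable def sgn (u : ℝ) : ℝ := if 0 < u then 1 else -1

/-- The deferral (abstention) loss
`ℓ_def(h,r,x,y) = L(h(x),y)·1_{r(x)>0} + c(x,y)·1_{r(x)≤0}`. -/
noncomputable def absLoss {X : Type*} (L : ℝ → ℝ → ℝ) (c : X × ℝ → ℝ)
    (h : X → ℝ) (r : X → ℝ) (z : X × ℝ) : ℝ :=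
  (if 0 < r z.1 then L (h z.1) z.2 else 0) + (if r z.1 ≤ 0 then c z else 0)

/-- The surrogate loss `ℓ_Φ(h,r,x,y) = c(x,y)·Φ(r(x)) + L(h(x),y)·Φ(−r(x))`. -/
noncomputable def absSur {X : Type*} (L : ℝ → ℝ → ℝ) (c : X × ℝ → ℝ) (Φ : ℝ → ℝ)
    (h : X → ℝ) (r : X → ℝ) (z : X × ℝ) : ℝ :=
  c z * Φ (r z.1) + L (h z.1) z.2 * Φ (-r z.1)

/-- Binary zero-one generalization error `E_{ℓ01}(r)`. -/
noncomputable def E01bin {X : Type*} [MeasurableSpace X]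
    (ν : Measure (X × PMOne)) (r : X → ℝ) : ℝ≥0∞ :=
  ν {z | sgn (r z.1) ≠ (z.2 : ℝ)}

/-- Binary margin-based surrogate generalization error `E_Φ(r)`. -/
noncomputable def EPhiBin {X : Type*} [MeasurableSpace X]
    (Φ : ℝ → ℝ) (ν : Measure (X × PMOne)) (r : X → ℝ) : ℝ≥0∞ :=
  ∫⁻ z, ENNReal.ofReal (Φ ((z.2 : ℝ) * r z.1)) ∂ν

/-!
For a fixed predictor `h`, deferral is a binary classification problem: the label `+1` carries the
conditional cost `C` and the label `-1` the conditional loss `l` of `h`, and both `ℓ_def` and `ℓ_Φ`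
become the corresponding binary errors. The excess errors however also compete with other
predictors. Fix a competitor `(h', r')`; patching `h'` with `h` we may assume that its conditional
loss satisfies `l' ≤ l`. One binary measure then accounts for both sources of excess. Where `r` and
`r'` take the same decision, only the gain `l - l'` is charged, to the label `-1`; where they
differ, the labels carry `C` and the conditional loss of whichever predictor is used for accepting.
The zero-one excess of `r` for this measure dominates the deferral excess over `(h', r')`, its
`Φ`-excess is dominated by the surrogate excess, and its mass is at most `l̄ + c̄`. Normalising the
measure in the consistency bound produces the factor `(l̄ + c̄) ^ (1 - α)`.
-/

section ExcessErrorBound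

variable {X : Type*} [MeasurableSpace X]

/-- The optimal binary zero-one error `E*_{ℓ01}`. -/
noncomputable def E01binOpt (ν : Measure (X × PMOne)) : ℝ≥0∞ :=
  ⨅ (r : X → ℝ) (_ : Measurable r), E01bin ν r

/-- The optimal binary surrogate error `E*_Φ`. -/
noncomputable def EPhiBinOpt (Φ : ℝ → ℝ) (ν : Measure (X × PMOne)) : ℝ≥0∞ :=
  ⨅ (r : X → ℝ) (_ : Measurable r), EPhiBin Φ ν r

/-- The optimal deferral error `E*_{ℓ_def}`. -/
noncomputable def absLossOpt (μ : Measure (X × ℝ)) (L : ℝ → ℝ → ℝ) (c : X × ℝ → ℝ) : ℝ≥0∞ :=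
  ⨅ (h : X → ℝ) (_ : Measurable h) (r : X → ℝ) (_ : Measurable r), genErr μ (absLoss L c h r)

/-- The optimal surrogate deferral error `E*_{ℓ_Φ}`. -/
noncomputable def absSurOpt (μ : Measure (X × ℝ)) (L : ℝ → ℝ → ℝ) (c : X × ℝ → ℝ) (Φ : ℝ → ℝ) :
    ℝ≥0∞ :=
  ⨅ (h : X → ℝ) (_ : Measurable h) (r : X → ℝ) (_ : Measurable r), genErr μ (absSur L c Φ h r)

variable (X) in
/-- The binary excess error bound with `Γ(t) = β t ^ α`, for all probability measures on
`X × {-1, +1}`. -/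
def HasPowerExcessBound (Φ : ℝ → ℝ) (α : ℝ) (β : ℝ≥0∞) : Prop :=
  ∀ ν : Measure (X × PMOne), IsProbabilityMeasure ν → ∀ r : X → ℝ, Measurable r →
    E01bin ν r - E01binOpt ν ≤ β * (EPhiBin Φ ν r - EPhiBinOpt Φ ν) ^ α

theorem tsub_le_tsub_of_add_le_add {a b s e : ℝ≥0∞} (he : e ≠ ∞) (h : e + a ≤ s + b) :
    a - b ≤ s - e := by
  rw [tsub_le_iff_right]
  exact (ENNReal.le_sub_of_add_le_left he h).trans add_tsub_le_tsub_add

section Scaling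

variable {Φ : ℝ → ℝ} {α : ℝ} {β k : ℝ≥0∞}

theorem E01bin_smul (ν : Measure (X × PMOne)) (r : X → ℝ) :
    E01bin (k • ν) r = k * E01bin ν r := by
  simp [E01bin]

theorem EPhiBin_smul (ν : Measure (X × PMOne)) (r : X → ℝ) :
    EPhiBin Φ (k • ν) r = k * EPhiBin Φ ν r := by
  simp [EPhiBin]

theorem E01binOpt_smul (hk₀ : k ≠ 0) (hk : k ≠ ∞) (ν : Measure (X × PMOne)) :
    E01binOpt (k • ν) = k * E01binOpt ν := by
  simp only [E01binOpt, E01bin_smul, ENNReal.mul_iInf_of_ne hk₀ hk]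

theorem EPhiBinOpt_smul (hk₀ : k ≠ 0) (hk : k ≠ ∞) (ν : Measure (X × PMOne)) :
    EPhiBinOpt Φ (k • ν) = k * EPhiBinOpt Φ ν := by
  simp only [EPhiBinOpt, EPhiBin_smul, ENNReal.mul_iInf_of_ne hk₀ hk]

theorem HasPowerExcessBound.of_isFiniteMeasure (hΦ : HasPowerExcessBound X Φ α β) (hα : 0 ≤ α)
    (ν : Measure (X × PMOne)) [IsFiniteMeasure ν] {r : X → ℝ} (hr : Measurable r) :
    E01bin ν r - E01binOpt ν ≤
      ν Set.univ ^ (1 - α) * β * (EPhiBin Φ ν r - EPhiBinOpt Φ ν) ^ α := by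
  obtain rfl | hν := eq_or_ne ν 0
  · simp [E01bin]
  set M := ν Set.univ
  have hM₀ : M ≠ 0 := Measure.measure_univ_ne_zero.2 hν
  have hM : M ≠ ∞ := measure_ne_top ν _
  have hinv₀ : M⁻¹ ≠ 0 := ENNReal.inv_ne_zero.2 hM
  have hinv : M⁻¹ ≠ ∞ := ENNReal.inv_ne_top.2 hM₀
  have hprob : IsProbabilityMeasure (M⁻¹ • ν) := ⟨by simp [M, ENNReal.inv_mul_cancel hM₀ hM]⟩
  have hnormalized := hΦ _ hprob r hr
  rw [E01bin_smul, E01binOpt_smul hinv₀ hinv, EPhiBin_smul, EPhiBinOpt_smul hinv₀ hinv,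
    ← ENNReal.mul_sub fun _ _ => hinv, ← ENNReal.mul_sub fun _ _ => hinv,
    ENNReal.mul_rpow_of_nonneg _ _ hα] at hnormalized
  have hpow : M * M⁻¹ ^ α = M ^ (1 - α) := by
    rw [ENNReal.inv_rpow, ENNReal.rpow_sub _ _ hM₀ hM, ENNReal.rpow_one, div_eq_mul_inv]
  calc
    _ = M * (M⁻¹ * (E01bin ν r - E01binOpt ν)) := by
      rw [← mul_assoc, ENNReal.mul_inv_cancel hM₀ hM, one_mul]
    _ ≤ M * (β * (M⁻¹ ^ α * (EPhiBin Φ ν r - EPhiBinOpt Φ ν) ^ α)) := by gcongr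
    _ = M * M⁻¹ ^ α * β * (EPhiBin Φ ν r - EPhiBinOpt Φ ν) ^ α := by ring
    _ = _ := by rw [hpow]

end Scaling

section BinaryMeasure

/-- The measure on `X × {-1, +1}` whose slices over the labels `+1` and `-1` have densities `p`
and `n` with respect to `m`. -/
noncomputable def binaryMeasure (m : Measure X) (p n : X → ℝ≥0∞) : Measure (X × PMOne) :=
  (m.withDensity p).map (fun x => (x, ⟨1, by simp [PMOne]⟩)) +
    (m.withDensity n).map (fun x => (x, ⟨-1, by simp [PMOne]⟩))

variable {m : Measure X} {p n p' n' : X → ℝ≥0∞}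

theorem binaryMeasure_mono (hp : p ≤ p') (hn : n ≤ n') :
    binaryMeasure m p n ≤ binaryMeasure m p' n' :=
  add_le_add (Measure.map_mono (withDensity_mono (.of_forall hp)) (by fun_prop))
    (Measure.map_mono (withDensity_mono (.of_forall hn)) (by fun_prop))

theorem lintegral_binaryMeasure (hp : Measurable p) (hn : Measurable n)
    {f : X × PMOne → ℝ≥0∞} (hf : Measurable f) :
    ∫⁻ z, f z ∂binaryMeasure m p n =
      ∫⁻ x, p x * f (x, ⟨1, by simp [PMOne]⟩) + n x * f (x, ⟨-1, by simp [PMOne]⟩) ∂m := by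
  rw [binaryMeasure, lintegral_add_measure, lintegral_map hf (by fun_prop),
    lintegral_map hf (by fun_prop), lintegral_withDensity_eq_lintegral_mul _ hp (by fun_prop),
    lintegral_withDensity_eq_lintegral_mul _ hn (by fun_prop), ← lintegral_add_left (by fun_prop)]
  rfl

theorem binaryMeasure_univ (hp : Measurable p) (hn : Measurable n) :
    binaryMeasure m p n Set.univ = ∫⁻ x, p x ∂m + ∫⁻ x, n x ∂m := by
  rw [← lintegral_one, lintegral_binaryMeasure hp hn measurable_const, ← lintegral_add_left hp]
  simp

theorem EPhiBin_binaryMeasure (hp : Measurable p) (hn : Measurable n) {Φ : ℝ → ℝ}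
    (hΦ : Measurable Φ) {r : X → ℝ} (hr : Measurable r) :
    EPhiBin Φ (binaryMeasure m p n) r =
      ∫⁻ x, p x * ENNReal.ofReal (Φ (r x)) + n x * ENNReal.ofReal (Φ (-r x)) ∂m := by
  rw [EPhiBin, lintegral_binaryMeasure hp hn (by fun_prop)]
  simp

theorem E01bin_binaryMeasure (hp : Measurable p) (hn : Measurable n) {r : X → ℝ}
    (hr : Measurable r) :
    E01bin (binaryMeasure m p n) r = ∫⁻ x, if 0 < r x then n x else p x ∂m := by
  have hsgn : Measurable sgn := measurable_const.ite measurableSet_Ioi measurable_const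
  have hmis : MeasurableSet {z : X × PMOne | sgn (r z.1) ≠ (z.2 : ℝ)} :=
    (measurableSet_eq_fun (by fun_prop) (by fun_prop)).compl
  rw [E01bin, ← lintegral_indicator_one hmis,
    lintegral_binaryMeasure hp hn (measurable_one.indicator hmis)]
  refine lintegral_congr fun x => ?_
  split_ifs with hx <;> norm_num [Set.indicator, sgn, hx]

end BinaryMeasure

section Reduction

/-- The points where the decisions given by the signs of `r` and `s` coincide. -/
def agreeSet (r s : X → ℝ) : Set X := {x | 0 < r x ↔ 0 < s x}

/-- The points accepted by `r` and rejected by `s`. -/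
def acceptRejectSet (r s : X → ℝ) : Set X := {x | 0 < r x ∧ s x ≤ 0}

open scoped Classical in
/-- The density of `reductionMeasure` on the label `-1`. Where the decisions agree, the only excess
of `r` comes from accepting with `l` instead of `l'`. -/
noncomputable def minusDensity (l l' : X → ℝ≥0∞) (r r' : X → ℝ) : X → ℝ≥0∞ :=
  (agreeSet r r').piecewise (l - l') ((acceptRejectSet r r').piecewise l l')

open scoped Classical in
/-- The density of `reductionMeasure` on the label `+1`. -/
noncomputable def plusDensity (C : X → ℝ≥0∞) (r r' : X → ℝ) : X → ℝ≥0∞ :=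
  (agreeSet r r').piecewise 0 C

/-- The binary problem comparing a deferral rule `r` with a competitor `r'`, for rejection cost
`C`, acceptance loss `l` under `r` and acceptance loss `l'` under `r'`. -/
noncomputable def reductionMeasure (m : Measure X) (C l l' : X → ℝ≥0∞) (r r' : X → ℝ) :
    Measure (X × PMOne) :=
  binaryMeasure m (plusDensity C r r') (minusDensity l l' r r')

variable {m : Measure X} {C l l' : X → ℝ≥0∞} {r r' : X → ℝ}

theorem measurableSet_agreeSet (hr : Measurable r) (hr' : Measurable r') :
    MeasurableSet (agreeSet r r') :=
  measurableSet_setOfPred.2 <| (measurableSet_setOfPred.1 (hr measurableSet_Ioi)).iff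
    (measurableSet_setOfPred.1 (hr' measurableSet_Ioi))

theorem measurableSet_acceptRejectSet (hr : Measurable r) (hr' : Measurable r') :
    MeasurableSet (acceptRejectSet r r') :=
  (hr measurableSet_Ioi).inter (hr' measurableSet_Iic)

theorem measurable_plusDensity (hC : Measurable C) (hr : Measurable r) (hr' : Measurable r') :
    Measurable (plusDensity C r r') :=
  measurable_zero.piecewise (measurableSet_agreeSet hr hr') hC

theorem measurable_minusDensity (hl : Measurable l) (hl' : Measurable l') (hr : Measurable r)
    (hr' : Measurable r') : Measurable (minusDensity l l' r r') :=
  (hl.sub hl').piecewise (measurableSet_agreeSet hr hr')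
    (hl.piecewise (measurableSet_acceptRejectSet hr hr') hl')

theorem reductionMeasure_le_binaryMeasure (hle : l' ≤ l) :
    reductionMeasure m C l l' r r' ≤ binaryMeasure m C l := by
  classical
  refine binaryMeasure_mono (Set.piecewise_le (fun _ _ => zero_le) fun _ _ => le_rfl)
    (Set.piecewise_le (fun _ _ => tsub_le_self) fun x _ => ?_)
  exact Set.piecewise_le (fun _ _ => le_rfl) (fun x _ => hle x) x

/- Where both `r` and `r'` accept, label `+1` has no mass, so the rival rejects there to avoid the
mass `l - l'` of label `-1` that `r` pays. -/
theorem E01bin_reductionMeasure_add_le (hC : Measurable C) (hl : Measurable l)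
    (hl' : Measurable l') (hr : Measurable r) (hr' : Measurable r') :
    E01bin (reductionMeasure m C l l' r r') (fun x => if 0 < r x then -1 else r' x) +
        E01bin (binaryMeasure m C l) r ≤
      E01bin (reductionMeasure m C l l' r r') r + E01bin (binaryMeasure m C l') r' := by
  have hp := measurable_plusDensity hC hr hr'
  have hn := measurable_minusDensity hl hl' hr hr'
  have hrival : Measurable fun x => if 0 < r x then -1 else r' x :=
    measurable_const.ite (hr measurableSet_Ioi) hr'
  have hrisk : Measurable fun x => if 0 < r x then l x else C x := hl.ite (hr measurableSet_Ioi) hC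
  have hrisk' : Measurable fun x => if 0 < r' x then l' x else C x :=
    hl'.ite (hr' measurableSet_Ioi) hC
  rw [reductionMeasure, E01bin_binaryMeasure hp hn hrival, E01bin_binaryMeasure hC hl hr,
    E01bin_binaryMeasure hp hn hr, E01bin_binaryMeasure hC hl' hr',
    ← lintegral_add_right _ hrisk, ← lintegral_add_right _ hrisk']
  refine lintegral_mono fun x => ?_
  have hneg : ¬(0 : ℝ) < -1 := by norm_num
  by_cases hx : 0 < r x <;> by_cases hx' : 0 < r' x
  · simpa [plusDensity, minusDensity, agreeSet, Set.piecewise, hx, hx', hneg, -Left.neg_pos_iff]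
      using le_tsub_add
  · simp [plusDensity, minusDensity, agreeSet, acceptRejectSet, Set.piecewise, hx, hx', hneg,
      not_lt.1 hx', add_comm, -Left.neg_pos_iff]
  · simp [plusDensity, minusDensity, agreeSet, acceptRejectSet, Set.piecewise, hx, hx', add_comm]
  · simp [plusDensity, agreeSet, Set.piecewise, hx, hx']

open scoped Classical in
theorem EPhiBin_add_reductionMeasure_le {Φ : ℝ → ℝ} (hΦ : Measurable Φ) (hC : Measurable C)
    (hl : Measurable l) (hl' : Measurable l') (hle : l' ≤ l) (hr : Measurable r)
    (hr' : Measurable r') {q : X → ℝ} (hq : Measurable q) :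
    EPhiBin Φ (binaryMeasure m C ((acceptRejectSet r r').piecewise l l'))
          ((agreeSet r r').piecewise r q) +
        EPhiBin Φ (reductionMeasure m C l l' r r') r ≤
      EPhiBin Φ (binaryMeasure m C l) r + EPhiBin Φ (reductionMeasure m C l l' r r') q := by
  have hp := measurable_plusDensity hC hr hr'
  have hn := measurable_minusDensity hl hl' hr hr'
  have hl₂ : Measurable ((acceptRejectSet r r').piecewise l l') :=
    hl.piecewise (measurableSet_acceptRejectSet hr hr') hl'
  have hr₂ : Measurable ((agreeSet r r').piecewise r q) :=
    hr.piecewise (measurableSet_agreeSet hr hr') hq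
  rw [reductionMeasure, EPhiBin_binaryMeasure hC hl₂ hΦ hr₂, EPhiBin_binaryMeasure hp hn hΦ hr,
    EPhiBin_binaryMeasure hC hl hΦ hr, EPhiBin_binaryMeasure hp hn hΦ hq,
    ← lintegral_add_right _ (by fun_prop), ← lintegral_add_right _ (by fun_prop)]
  refine lintegral_mono fun x => ?_
  by_cases hagree : x ∈ agreeSet r r'
  · have hkeep : x ∉ acceptRejectSet r r' := fun hx => hx.2.not_gt (hagree.1 hx.1)
    simp only [plusDensity, minusDensity, Set.piecewise_eq_of_mem _ _ _ hagree,
      Set.piecewise_eq_of_notMem _ _ _ hkeep, Pi.zero_apply, Pi.sub_apply, zero_mul, zero_add]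
    rw [add_assoc, ← add_mul, add_tsub_cancel_of_le (hle x)]
    exact le_self_add
  · have hpatch : (acceptRejectSet r r').piecewise l l' x ≤ l x :=
      Set.piecewise_le (fun _ _ => le_rfl) (fun x _ => hle x) x
    simp only [plusDensity, minusDensity, Set.piecewise_eq_of_notMem _ _ _ hagree]
    rw [add_comm]
    gcongr

end Reduction

section ConditionalRisk

variable {Y : Type*} [MeasurableSpace Y] [StandardBorelSpace Y] [Nonempty Y]

/-- The conditional risk `x ↦ E[f(x, y) | x]` of a nonnegative loss `f`. -/
noncomputable def condRisk (μ : Measure (X × Y)) [IsFiniteMeasure μ] (f : X × Y → ℝ) (x : X) :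
    ℝ≥0∞ :=
  ∫⁻ y, ENNReal.ofReal (f (x, y)) ∂μ.condKernel x

variable (μ : Measure (X × Y)) [IsFiniteMeasure μ] {f : X × Y → ℝ}

theorem measurable_condRisk (hf : Measurable f) : Measurable (condRisk μ f) :=
  hf.ennreal_ofReal.lintegral_kernel_prod_right'

theorem lintegral_condRisk (hf : Measurable f) : ∫⁻ x, condRisk μ f x ∂μ.fst = genErr μ f :=
  Measure.lintegral_condKernel hf.ennreal_ofReal

end ConditionalRisk

theorem genErr_le_ofReal {W : Type*} [MeasurableSpace W] (μ : Measure W) [IsProbabilityMeasure μ]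
    {f : W → ℝ} {b : ℝ} (hf : ∀ w, f w ≤ b) : genErr μ f ≤ ENNReal.ofReal b :=
  calc
    genErr μ f ≤ ∫⁻ _, ENNReal.ofReal b ∂μ :=
      lintegral_mono fun w => ENNReal.ofReal_le_ofReal (hf w)
    _ = ENNReal.ofReal b := by simp

section Deferral

/-- The loss `(x, y) ↦ L(h(x), y)` of a predictor. -/
def predLoss (L : ℝ → ℝ → ℝ) (h : X → ℝ) (z : X × ℝ) : ℝ := L (h z.1) z.2

/-- The binary problem of choosing `r` in deferral with a fixed predictor `h`: rejection costs the
conditional risk of `c`, acceptance that of `h`. -/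
noncomputable def deferralMeasure (μ : Measure (X × ℝ)) [IsFiniteMeasure μ] (L : ℝ → ℝ → ℝ)
    (c : X × ℝ → ℝ) (h : X → ℝ) : Measure (X × PMOne) :=
  binaryMeasure μ.fst (condRisk μ c) (condRisk μ (predLoss L h))

variable {L : ℝ → ℝ → ℝ} {c : X × ℝ → ℝ} {Φ : ℝ → ℝ} {h h' r r' : X → ℝ}

theorem measurable_predLoss (hL : Measurable fun p : ℝ × ℝ => L p.1 p.2) (hh : Measurable h) :
    Measurable (predLoss L h) :=
  hL.comp ((hh.comp measurable_fst).prodMk measurable_snd)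

theorem measurable_absLoss (hL : Measurable fun p : ℝ × ℝ => L p.1 p.2) (hc : Measurable c)
    (hh : Measurable h) (hr : Measurable r) : Measurable (absLoss L c h r) :=
  ((measurable_predLoss hL hh).ite (hr.comp measurable_fst measurableSet_Ioi)
    measurable_const).add (hc.ite (hr.comp measurable_fst measurableSet_Iic) measurable_const)

theorem measurable_absSur (hL : Measurable fun p : ℝ × ℝ => L p.1 p.2) (hc : Measurable c)
    (hΦ : Measurable Φ) (hh : Measurable h) (hr : Measurable r) : Measurable (absSur L c Φ h r) :=
  (hc.mul (hΦ.comp (hr.comp measurable_fst))).add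
    ((measurable_predLoss hL hh).mul (hΦ.comp (hr.comp measurable_fst).neg))

section FiniteMeasure

variable (μ : Measure (X × ℝ)) [IsFiniteMeasure μ]

theorem condRisk_predLoss_piecewise (s : Set X) [∀ x, Decidable (x ∈ s)] :
    condRisk μ (predLoss L (s.piecewise h h')) =
      s.piecewise (condRisk μ (predLoss L h)) (condRisk μ (predLoss L h')) := by
  ext x
  by_cases hx : x ∈ s <;> simp [condRisk, predLoss, hx]

theorem condRisk_absLoss (x : X) :
    condRisk μ (absLoss L c h r) x =
      if 0 < r x then condRisk μ (predLoss L h) x else condRisk μ c x := by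
  split_ifs with hx
  · simp [condRisk, absLoss, predLoss, hx, hx.not_ge]
  · simp [condRisk, absLoss, hx, not_lt.1 hx]

theorem condRisk_absSur (hL : Measurable fun p : ℝ × ℝ => L p.1 p.2) (hL₀ : ∀ y' y, 0 ≤ L y' y)
    (hc : Measurable c) (hc₀ : ∀ z, 0 ≤ c z) (hΦ₀ : ∀ u, 0 ≤ Φ u) (x : X) :
    condRisk μ (absSur L c Φ h r) x = condRisk μ c x * ENNReal.ofReal (Φ (r x)) +
      condRisk μ (predLoss L h) x * ENNReal.ofReal (Φ (-r x)) := by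
  have hcx : Measurable fun y => ENNReal.ofReal (c (x, y)) := by fun_prop
  have hLx : Measurable fun y => ENNReal.ofReal (predLoss L h (x, y)) :=
    (hL.comp (measurable_prodMk_left (x := h x))).ennreal_ofReal
  simp only [condRisk]
  rw [← lintegral_mul_const _ hcx, ← lintegral_mul_const _ hLx,
    ← lintegral_add_left (hcx.mul_const _)]
  refine lintegral_congr fun y => ?_
  rw [absSur, ENNReal.ofReal_add (mul_nonneg (hc₀ _) (hΦ₀ _)) (mul_nonneg (hL₀ _ _) (hΦ₀ _)),
    ENNReal.ofReal_mul (hc₀ _), ENNReal.ofReal_mul (hL₀ _ _), predLoss]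

theorem E01bin_deferralMeasure (hL : Measurable fun p : ℝ × ℝ => L p.1 p.2) (hc : Measurable c)
    (hh : Measurable h) (hr : Measurable r) :
    E01bin (deferralMeasure μ L c h) r = genErr μ (absLoss L c h r) := by
  rw [deferralMeasure, E01bin_binaryMeasure (measurable_condRisk μ hc)
      (measurable_condRisk μ (measurable_predLoss hL hh)) hr,
    ← lintegral_condRisk μ (measurable_absLoss hL hc hh hr)]
  simp only [condRisk_absLoss]

theorem EPhiBin_deferralMeasure (hL : Measurable fun p : ℝ × ℝ => L p.1 p.2)
    (hL₀ : ∀ y' y, 0 ≤ L y' y) (hc : Measurable c) (hc₀ : ∀ z, 0 ≤ c z) (hΦ : Measurable Φ)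
    (hΦ₀ : ∀ u, 0 ≤ Φ u) (hh : Measurable h) (hr : Measurable r) :
    EPhiBin Φ (deferralMeasure μ L c h) r = genErr μ (absSur L c Φ h r) := by
  rw [deferralMeasure, EPhiBin_binaryMeasure (measurable_condRisk μ hc)
      (measurable_condRisk μ (measurable_predLoss hL hh)) hΦ hr,
    ← lintegral_condRisk μ (measurable_absSur hL hc hΦ hh hr)]
  simp only [condRisk_absSur μ hL hL₀ hc hc₀ hΦ₀]

theorem deferralMeasure_univ (hL : Measurable fun p : ℝ × ℝ => L p.1 p.2) (hc : Measurable c)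
    (hh : Measurable h) :
    deferralMeasure μ L c h Set.univ = genErr μ c + genErr μ (predLoss L h) := by
  have hl := measurable_predLoss hL hh
  rw [deferralMeasure, binaryMeasure_univ (measurable_condRisk μ hc) (measurable_condRisk μ hl),
    lintegral_condRisk μ hc, lintegral_condRisk μ hl]

theorem exists_condRisk_predLoss_le (hL : Measurable fun p : ℝ × ℝ => L p.1 p.2)
    (hh : Measurable h) (hh' : Measurable h') :
    ∃ g : X → ℝ, Measurable g ∧ condRisk μ (predLoss L g) ≤ condRisk μ (predLoss L h) ∧
      condRisk μ (predLoss L g) ≤ condRisk μ (predLoss L h') := by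
  classical
  set s := {x | condRisk μ (predLoss L h) x ≤ condRisk μ (predLoss L h') x}
  have hs : MeasurableSet s :=
    measurableSet_le (measurable_condRisk μ (measurable_predLoss hL hh))
      (measurable_condRisk μ (measurable_predLoss hL hh'))
  refine ⟨s.piecewise h h', hh.piecewise hs hh', ?_⟩
  rw [condRisk_predLoss_piecewise]
  exact ⟨Set.piecewise_le (fun _ _ => le_rfl) fun x hx => (not_le.1 hx).le,
    Set.piecewise_le (fun x hx => hx) fun _ _ => le_rfl⟩

/-- The `reductionMeasure` of the pair `(h, r)` against a competitor `(h', r')`. -/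
noncomputable def competitionMeasure (L : ℝ → ℝ → ℝ) (c : X × ℝ → ℝ) (h h' r r' : X → ℝ) :
    Measure (X × PMOne) :=
  reductionMeasure μ.fst (condRisk μ c) (condRisk μ (predLoss L h)) (condRisk μ (predLoss L h'))
    r r'

theorem competitionMeasure_le_deferralMeasure
    (hle : condRisk μ (predLoss L h') ≤ condRisk μ (predLoss L h)) :
    competitionMeasure μ L c h h' r r' ≤ deferralMeasure μ L c h :=
  reductionMeasure_le_binaryMeasure hle

theorem genErr_absLoss_sub_le_E01bin_sub (hL : Measurable fun p : ℝ × ℝ => L p.1 p.2)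
    (hc : Measurable c) (hh : Measurable h) (hh' : Measurable h') (hr : Measurable r)
    (hr' : Measurable r') [IsFiniteMeasure (competitionMeasure μ L c h h' r r')] :
    genErr μ (absLoss L c h r) - genErr μ (absLoss L c h' r') ≤
      E01bin (competitionMeasure μ L c h h' r r') r -
        E01binOpt (competitionMeasure μ L c h h' r r') := by
  set ν := competitionMeasure μ L c h h' r r'
  set rival : X → ℝ := fun x => if 0 < r x then -1 else r' x
  have hrival : Measurable rival := measurable_const.ite (hr measurableSet_Ioi) hr'
  have hadd := E01bin_reductionMeasure_add_le (m := μ.fst) (measurable_condRisk μ hc)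
    (measurable_condRisk μ (measurable_predLoss hL hh))
    (measurable_condRisk μ (measurable_predLoss hL hh')) hr hr'
  rw [← E01bin_deferralMeasure μ hL hc hh hr, ← E01bin_deferralMeasure μ hL hc hh' hr']
  calc
    _ ≤ E01bin ν r - E01bin ν rival := tsub_le_tsub_of_add_le_add (measure_ne_top ν _) hadd
    _ ≤ E01bin ν r - E01binOpt ν := by
      gcongr
      exact iInf₂_le rival hrival

theorem EPhiBin_sub_le_genErr_absSur_sub (hL : Measurable fun p : ℝ × ℝ => L p.1 p.2)
    (hL₀ : ∀ y' y, 0 ≤ L y' y) (hc : Measurable c) (hc₀ : ∀ z, 0 ≤ c z) (hΦ : Measurable Φ)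
    (hΦ₀ : ∀ u, 0 ≤ Φ u) (hh : Measurable h) (hh' : Measurable h') (hr : Measurable r)
    (hr' : Measurable r') (hle : condRisk μ (predLoss L h') ≤ condRisk μ (predLoss L h))
    (hopt : absSurOpt μ L c Φ ≠ ∞) :
    EPhiBin Φ (competitionMeasure μ L c h h' r r') r -
        EPhiBinOpt Φ (competitionMeasure μ L c h h' r r') ≤
      genErr μ (absSur L c Φ h r) - absSurOpt μ L c Φ := by
  classical
  simp only [EPhiBinOpt, ENNReal.sub_iInf, iSup_le_iff]
  intro q hq
  refine tsub_le_tsub_of_add_le_add hopt ?_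
  set h₂ := (acceptRejectSet r r').piecewise h h'
  set r₂ := (agreeSet r r').piecewise r q
  have hh₂ : Measurable h₂ := hh.piecewise (measurableSet_acceptRejectSet hr hr') hh'
  have hr₂ : Measurable r₂ := hr.piecewise (measurableSet_agreeSet hr hr') hq
  have hpair : absSurOpt μ L c Φ ≤ EPhiBin Φ (deferralMeasure μ L c h₂) r₂ := by
    rw [EPhiBin_deferralMeasure μ hL hL₀ hc hc₀ hΦ hΦ₀ hh₂ hr₂]
    exact iInf₂_le_of_le h₂ hh₂ (iInf₂_le r₂ hr₂)
  calc
    _ ≤ EPhiBin Φ (deferralMeasure μ L c h₂) r₂ +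
        EPhiBin Φ (competitionMeasure μ L c h h' r r') r := by gcongr
    _ ≤ EPhiBin Φ (deferralMeasure μ L c h) r +
        EPhiBin Φ (competitionMeasure μ L c h h' r r') q := by
      rw [deferralMeasure, condRisk_predLoss_piecewise]
      exact EPhiBin_add_reductionMeasure_le hΦ (measurable_condRisk μ hc)
        (measurable_condRisk μ (measurable_predLoss hL hh))
        (measurable_condRisk μ (measurable_predLoss hL hh')) hle hr hr' hq
    _ = _ := by rw [EPhiBin_deferralMeasure μ hL hL₀ hc hc₀ hΦ hΦ₀ hh hr]

end FiniteMeasure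

section BoundedLoss

variable {lbar cbar α : ℝ} {β : ℝ≥0∞} (μ : Measure (X × ℝ)) [IsProbabilityMeasure μ]

theorem deferralMeasure_univ_le (hL : Measurable fun p : ℝ × ℝ => L p.1 p.2)
    (hLb : ∀ y' y, L y' y ∈ Set.Icc 0 lbar) (hc : Measurable c)
    (hcb : ∀ z, c z ∈ Set.Icc 0 cbar) (hh : Measurable h) :
    deferralMeasure μ L c h Set.univ ≤ ENNReal.ofReal (lbar + cbar) := by
  obtain ⟨z⟩ := nonempty_of_isProbabilityMeasure μ
  have hlbar : 0 ≤ lbar := (hLb 0 0).1.trans (hLb 0 0).2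
  have hcbar : 0 ≤ cbar := (hcb z).1.trans (hcb z).2
  rw [deferralMeasure_univ μ hL hc hh, add_comm, ENNReal.ofReal_add hlbar hcbar]
  exact add_le_add (genErr_le_ofReal μ fun z => (hLb _ _).2) (genErr_le_ofReal μ fun z => (hcb z).2)

theorem absSurOpt_ne_top (hLb : ∀ y' y, L y' y ≤ lbar) (hcb : ∀ z, c z ≤ cbar)
    (hΦ₀ : 0 ≤ Φ 0) : absSurOpt μ L c Φ ≠ ∞ := by
  have hzero : genErr μ (absSur L c Φ 0 0) ≤ ENNReal.ofReal (cbar * Φ 0 + lbar * Φ 0) := by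
    refine genErr_le_ofReal μ fun z => ?_
    simp only [absSur, Pi.zero_apply, neg_zero]
    gcongr
    exacts [hcb z, hLb _ _]
  exact ne_top_of_le_ne_top ENNReal.ofReal_ne_top <|
    (iInf₂_le_of_le 0 measurable_zero (iInf₂_le 0 measurable_zero)).trans hzero

theorem genErr_absLoss_sub_le_of_condRisk_le (hL : Measurable fun p : ℝ × ℝ => L p.1 p.2)
    (hLb : ∀ y' y, L y' y ∈ Set.Icc 0 lbar) (hc : Measurable c)
    (hcb : ∀ z, c z ∈ Set.Icc 0 cbar) (hΦ : Measurable Φ) (hΦ₀ : ∀ u, 0 ≤ Φ u)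
    (hα : α ∈ Set.Icc 0 1) (hcons : HasPowerExcessBound X Φ α β)
    (hh : Measurable h) (hh' : Measurable h') (hr : Measurable r) (hr' : Measurable r')
    (hle : condRisk μ (predLoss L h') ≤ condRisk μ (predLoss L h)) :
    genErr μ (absLoss L c h r) - genErr μ (absLoss L c h' r') ≤
      ENNReal.ofReal (lbar + cbar) ^ (1 - α) * β *
        (genErr μ (absSur L c Φ h r) - absSurOpt μ L c Φ) ^ α := by
  set ν := competitionMeasure μ L c h h' r r'
  have hmass : ν Set.univ ≤ ENNReal.ofReal (lbar + cbar) :=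
    (competitionMeasure_le_deferralMeasure μ hle _).trans
      (deferralMeasure_univ_le μ hL hLb hc hcb hh)
  have : IsFiniteMeasure ν := ⟨hmass.trans_lt ENNReal.ofReal_lt_top⟩
  have hα₁ : 0 ≤ 1 - α := sub_nonneg.2 hα.2
  have hα₀ : 0 ≤ α := hα.1
  have hopt : absSurOpt μ L c Φ ≠ ∞ :=
    absSurOpt_ne_top μ (fun y' y => (hLb y' y).2) (fun z => (hcb z).2) (hΦ₀ 0)
  calc
    _ ≤ E01bin ν r - E01binOpt ν := genErr_absLoss_sub_le_E01bin_sub μ hL hc hh hh' hr hr'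
    _ ≤ ν Set.univ ^ (1 - α) * β * (EPhiBin Φ ν r - EPhiBinOpt Φ ν) ^ α :=
      hcons.of_isFiniteMeasure hα₀ ν hr
    _ ≤ _ := by
      gcongr ?_ ^ _ * _ * ?_ ^ _
      exact EPhiBin_sub_le_genErr_absSur_sub μ hL (fun y' y => (hLb y' y).1) hc
        (fun z => (hcb z).1) hΦ hΦ₀ hh hh' hr hr' hle hopt

theorem single_expert_single_stage_excess_error_bound_general
    (hL : Measurable fun p : ℝ × ℝ => L p.1 p.2) (hLb : ∀ y' y, L y' y ∈ Set.Icc 0 lbar)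
    (hc : Measurable c) (hcb : ∀ z, c z ∈ Set.Icc 0 cbar) (hΦ : Measurable Φ)
    (hΦ₀ : ∀ u, 0 ≤ Φ u) (hα : α ∈ Set.Icc 0 1) (hcons : HasPowerExcessBound X Φ α β)
    (hh : Measurable h) (hr : Measurable r) :
    genErr μ (absLoss L c h r) - absLossOpt μ L c ≤
      ENNReal.ofReal (lbar + cbar) ^ (1 - α) * β *
        (genErr μ (absSur L c Φ h r) - absSurOpt μ L c Φ) ^ α := by
  simp only [absLossOpt, ENNReal.sub_iInf, iSup_le_iff]
  intro h' hh' r' hr'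
  obtain ⟨g, hg, hgh, hgh'⟩ := exists_condRisk_predLoss_le μ hL hh hh'
  have hpatch : genErr μ (absLoss L c g r') ≤ genErr μ (absLoss L c h' r') := by
    rw [← E01bin_deferralMeasure μ hL hc hg hr', ← E01bin_deferralMeasure μ hL hc hh' hr']
    exact binaryMeasure_mono le_rfl hgh' _
  calc
    _ ≤ genErr μ (absLoss L c h r) - genErr μ (absLoss L c g r') := tsub_le_tsub_left hpatch _
    _ ≤ _ := genErr_absLoss_sub_le_of_condRisk_le μ hL hLb hc hcb hΦ hΦ₀ hα hcons hh hg hr hr' hgh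

end BoundedLoss

end Deferral

end ExcessErrorBound

/-- Corollary 5.2: single-expert single-stage excess error bound,
general `Γ`. -/
theorem single_expert_single_stage_excess_error_bound {X : Type*} [MeasurableSpace X]
    (lbar cbar : ℝ) (hlbar : 0 < lbar) (hcbar : 0 < cbar)
    (L : ℝ → ℝ → ℝ) (hLmeas : Measurable fun p : ℝ × ℝ => L p.1 p.2)
    (hL : ∀ y' y, L y' y ∈ Set.Icc 0 lbar)
    (c : X × ℝ → ℝ) (hcmeas : Measurable c) (hc : ∀ z, c z ∈ Set.Ioc 0 cbar)
    (Φ : ℝ → ℝ) (hΦmeas : Measurable Φ) (hΦmono : Antitone Φ)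
    (hΦ0 : ∀ u, 0 ≤ Φ u) (hΦ1 : ∀ u, u ≤ 0 → 1 ≤ Φ u)
    (α β : ℝ) (hα : α ∈ Set.Ioc (0 : ℝ) 1) (hβ : 0 < β)
    (hcons : ∀ ν : Measure (X × PMOne), IsProbabilityMeasure ν →
      ∀ r : X → ℝ, Measurable r →
        E01bin ν r - (⨅ (r' : X → ℝ) (_ : Measurable r'), E01bin ν r')
          ≤ ENNReal.ofReal β *
            (EPhiBin Φ ν r - ⨅ (r' : X → ℝ) (_ : Measurable r'), EPhiBin Φ ν r') ^ α)
    (μ : Measure (X × ℝ)) [IsProbabilityMeasure μ]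
    (h : X → ℝ) (hh : Measurable h) (r : X → ℝ) (hr : Measurable r) :
    genErr μ (absLoss L c h r)
        - (⨅ (h' : X → ℝ) (_ : Measurable h') (r' : X → ℝ) (_ : Measurable r'),
            genErr μ (absLoss L c h' r'))
      ≤ max
          (genErr μ (absSur L c Φ h r)
            - ⨅ (h' : X → ℝ) (_ : Measurable h') (r' : X → ℝ) (_ : Measurable r'),
                genErr μ (absSur L c Φ h' r'))
          (ENNReal.ofReal ((lbar + cbar) ^ (1 - α) * β) *
            (genErr μ (absSur L c Φ h r)
              - ⨅ (h' : X → ℝ) (_ : Measurable h') (r' : X → ℝ) (_ : Measurable r'),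
                  genErr μ (absSur L c Φ h' r')) ^ α) := by
  have hbound := single_expert_single_stage_excess_error_bound_general μ hLmeas hL hcmeas
    (fun z => Set.Ioc_subset_Icc_self (hc z)) hΦmeas hΦ0 (Set.Ioc_subset_Icc_self hα) hcons hh hr
  have hK : 0 < lbar + cbar := add_pos hlbar hcbar
  rw [ENNReal.ofReal_mul (by positivity), ← ENNReal.ofReal_rpow_of_pos hK]
  exact le_max_of_le_right hbound
end
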